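/- arXiv:0803.0697 — 9 statements merged into one kernel-verified Lean document; each statement's English description precedes it below -/
import Mathlib

section
/- Let S be a real 2n×2n symplectic matrix. Then for every nonzero complex number μ, the algebraic multiplicity of μ as an eigenvalue of S (i.e., the multiplicity of μ as a root of the characteristic polynomial of S, viewed over ℂ) equals the algebraic multiplicity of μ⁻¹ as an eigenvalue of S. -/
open Matrix

/-!
If `Aᵀ * B * A = B` with `B` invertible, then `A⁻¹ = B⁻¹ * Aᵀ * B` is similar to `Aᵀ`, so `A⁻¹` and
`A` have the same characteristic polynomial. Up to a unit, the characteristic polynomial of `A⁻¹`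
is also the reverse of that of `A`, and reversal turns a factor `X - a` into
`1 - a X = -a (X - a⁻¹)`; hence it exchanges the multiplicities of `a` and `a⁻¹`.
-/

section Reverse

open Polynomial

variable {R : Type*} [CommRing R] {a b : R} {p : R[X]}

lemma reverse_mul_of_monic_left (hp : p.Monic) (q : R[X]) :
    (p * q).reverse = p.reverse * q.reverse := by
  obtain rfl | hq := eq_or_ne q 0
  · simp
  · exact reverse_mul (by simpa [hp.leadingCoeff] using hq)

lemma reverse_pow_of_monic (hp : p.Monic) (n : ℕ) : (p ^ n).reverse = p.reverse ^ n := by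
  induction n with
  | zero => simpa using reverse_C (1 : R)
  | succ n ih => rw [pow_succ', reverse_mul_of_monic_left hp, ih, pow_succ']

lemma reverse_X_sub_C (a : R) : (X - C a).reverse = 1 - C a * X := by
  nontriviality R
  have hX : (X : R[X]).reverse = 1 := by
    rw [← one_mul X, reverse_mul_X, ← C_1, reverse_C]
  rw [sub_eq_add_neg, ← C_neg, reverse_add_C, hX, natDegree_X, pow_one, C_neg, neg_mul,
    ← sub_eq_add_neg]

lemma X_sub_C_dvd_reverse_X_sub_C (hab : a * b = 1) : X - C b ∣ (X - C a).reverse := by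
  refine ⟨-C a, ?_⟩
  have hC : C a * C b = 1 := by rw [← C_mul, hab, C_1]
  linear_combination reverse_X_sub_C a - hC

lemma X_sub_C_pow_dvd_reverse (hab : a * b = 1) {n : ℕ} (h : (X - C a) ^ n ∣ p) :
    (X - C b) ^ n ∣ p.reverse := by
  obtain ⟨q, rfl⟩ := h
  rw [reverse_mul_of_monic_left ((monic_X_sub_C a).pow n), reverse_pow_of_monic (monic_X_sub_C a)]
  exact (pow_dvd_pow_of_dvd (X_sub_C_dvd_reverse_X_sub_C hab) n).mul_right _

lemma reverse_reverse_dvd (p : R[X]) : p.reverse.reverse ∣ p := by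
  have hmirror : p.mirror.reverse = p.reverse.reverse := reverse_mul_X_pow _ _
  rw [← hmirror]
  exact Dvd.intro _ p.mirror_mirror

lemma rootMultiplicity_reverse (hab : a * b = 1) (p : R[X]) :
    p.reverse.rootMultiplicity b = p.rootMultiplicity a := by
  obtain rfl | hp := eq_or_ne p 0
  · simp
  have hrev : p.reverse ≠ 0 := by rwa [Ne, reverse_eq_zero]
  apply le_antisymm
  · rw [le_rootMultiplicity_iff hp]
    have hdvd : (X - C a) ^ p.reverse.rootMultiplicity b ∣ p.reverse.reverse :=
      X_sub_C_pow_dvd_reverse (by rw [mul_comm, hab]) (pow_rootMultiplicity_dvd _ _)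
    exact hdvd.trans (reverse_reverse_dvd p)
  · rw [le_rootMultiplicity_iff hrev]
    exact X_sub_C_pow_dvd_reverse hab (pow_rootMultiplicity_dvd _ _)

lemma rootMultiplicity_eq_of_associated {q : R[X]} (h : Associated p q) (a : R) :
    p.rootMultiplicity a = q.rootMultiplicity a := by
  classical
  simp only [rootMultiplicity_eq_multiplicity, h.eq_zero_iff,
    multiplicity_eq_of_associated_right h]

end Reverse

section Charpoly

open scoped Ring

variable {m R : Type*} [Fintype m] [DecidableEq m] [CommRing R] {A B : Matrix m m R} {a b : R}

lemma associated_charpoly_inv_reverse_charpoly (hA : IsUnit A) :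
    Associated A⁻¹.charpoly A.charpoly.reverse := by
  have hdet : IsUnit A.det⁻¹ʳ := ((isUnit_iff_isUnit_det A).1 hA).ringInverse
  have hunit : IsUnit ((-1) ^ Fintype.card m * Polynomial.C A.det⁻¹ʳ) :=
    (isUnit_one.neg.pow _).mul (hdet.map Polynomial.C)
  rw [charpoly_inv A hA, reverse_charpoly]
  exact associated_unit_mul_left _ _ hunit

lemma rootMultiplicity_charpoly_inv (hA : IsUnit A) (hab : a * b = 1) :
    A⁻¹.charpoly.rootMultiplicity b = A.charpoly.rootMultiplicity a := by
  rw [rootMultiplicity_eq_of_associated (associated_charpoly_inv_reverse_charpoly hA),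
    rootMultiplicity_reverse hab]

lemma inv_mul_transpose_mul_mul_eq_one (hB : IsUnit B.det) (hA : Aᵀ * B * A = B) :
    B⁻¹ * Aᵀ * B * A = 1 := by
  rw [Matrix.mul_assoc B⁻¹, Matrix.mul_assoc, hA, nonsing_inv_mul B hB]

lemma charpoly_inv_of_transpose_mul_mul_eq (hB : IsUnit B.det) (hA : Aᵀ * B * A = B) :
    A⁻¹.charpoly = A.charpoly := by
  have hsimilar : (B⁻¹ * Aᵀ * B).charpoly = Aᵀ.charpoly :=
    charpoly_units_conj' (B.nonsingInvUnit hB) Aᵀ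
  rw [inv_eq_left_inv (inv_mul_transpose_mul_mul_eq_one hB hA), hsimilar, charpoly_transpose]

theorem symplectic_eigenvalue_pairing_general (hB : IsUnit B.det) (hA : Aᵀ * B * A = B)
    (hab : a * b = 1) :
    A.charpoly.rootMultiplicity a = A.charpoly.rootMultiplicity b := by
  have hunit : IsUnit A := .of_mul_eq_one_right _ (inv_mul_transpose_mul_mul_eq_one hB hA)
  rw [← rootMultiplicity_charpoly_inv hunit hab, charpoly_inv_of_transpose_mul_mul_eq hB hA]

end Charpoly

/-- The eigenvalues of a real symplectic matrix come in pairs `μ, μ⁻¹`: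
for every nonzero `μ ∈ ℂ`, the algebraic multiplicity of `μ` as a root of the
(complexified) characteristic polynomial of `S` equals that of `μ⁻¹`. -/
theorem symplectic_eigenvalue_pairing
    (n : ℕ) (S : Matrix (Fin n ⊕ Fin n) (Fin n ⊕ Fin n) ℝ)
    (hS : Sᵀ * (Matrix.fromBlocks 0 (-1) 1 0 : Matrix (Fin n ⊕ Fin n) (Fin n ⊕ Fin n) ℝ) * S
        = Matrix.fromBlocks 0 (-1) 1 0)
    (μ : ℂ) (hμ : μ ≠ 0) :
    Polynomial.rootMultiplicity μ ((S.map ((↑) : ℝ → ℂ)).charpoly)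
      = Polynomial.rootMultiplicity μ⁻¹ ((S.map ((↑) : ℝ → ℂ)).charpoly) := by
  have hA : S.map ((↑) : ℝ → ℂ) ∈ symplecticGroup (Fin n) ℂ :=
    SymplecticGroup.map_mem (SymplecticGroup.mem_iff'.2 hS) Complex.ofRealHom
  exact symplectic_eigenvalue_pairing_general (isUnit_det_J _ _) (SymplecticGroup.mem_iff'.1 hA)
    (mul_inv_cancel₀ hμ)
end

section
/- The real symplectic group Sp(2n, ℝ) is path-connected: for every real 2n×2n symplectic matrix K there exists a continuous map γ : [0,1] → M_{2n}(ℝ) such that γ(t) is symplectic for every t ∈ [0,1], γ(0) = I, and γ(1) = K. -/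
open Matrix

/-!
The symplectic group over any field is generated by the shears `[[1, X], [0, 1]]` and
`[[1, 0], [X, 1]]` with `X` symmetric, and over a path-connected ring every shear contracts to `1`
inside the shears by scaling `X`.

For the generation, write a symplectic matrix in blocks `A, B, C, D`. If `A` is invertible, block
LDU elimination writes the matrix as a lower shear times `diag(A, A⁻ᵀ)` times an upper shear. For
symmetric `S` the factor `diag(S, S⁻¹)` is the product of the Weyl elements `[[0, S], [-S⁻¹, 0]]`
and `[[0, -1], [1, 0]]`, each of which is a product of three shears; and invertible matrices are
products of symmetric ones, since a transvection times a swap of its two coordinates is symmetric.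
Finally `A` can be made invertible by an upper shear, which replaces it by `A + X * C`: elementary
operations reduce `A` to a diagonal matrix, and then the indicator of the zero entries of `A` is a
suitable diagonal `X`.
-/

theorem joinedIn_of_continuous {X Y : Type*} [TopologicalSpace X] [PathConnectedSpace X]
    [TopologicalSpace Y] {f : X → Y} {s : Set Y} (hf : Continuous f) (hs : ∀ x, f x ∈ s)
    (x y : X) : JoinedIn s (f x) (f y) :=
  ((joinedIn_univ.2 (PathConnectedSpace.joined x y)).map hf).mono
    (Set.image_subset_iff.2 fun z _ ↦ hs z)

theorem isPathConnected_submonoidClosure_of_joinedIn_one {M : Type*} [Monoid M] [TopologicalSpace M]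
    [ContinuousMul M] {s : Set M} (hs : ∀ x ∈ s, JoinedIn s 1 x) :
    IsPathConnected (Submonoid.closure s : Set M) := by
  refine ⟨1, one_mem _, fun x hx ↦ ?_⟩
  induction hx using Submonoid.closure_induction with
  | mem x hx => exact (hs x hx).mono Submonoid.subset_closure
  | one => exact JoinedIn.refl (one_mem _)
  | mul x y _ _ hx hy => simpa using hx.mul hy

variable {l R K : Type*} [DecidableEq l]

section Shears

variable [CommRing R]

variable (l R) in
/-- The symplectic shears: block unitriangular matrices, upper or lower, whose off-diagonal block
is symmetric. They generate the symplectic group over a field. -/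
def symplecticShears : Set (Matrix (l ⊕ l) (l ⊕ l) R) :=
  {M | ∃ X : Matrix l l R, X.IsSymm ∧ (M = fromBlocks 1 X 0 1 ∨ M = fromBlocks 1 0 X 1)}

theorem joinedIn_symplecticShears [TopologicalSpace R] [ContinuousMul R] [PathConnectedSpace R]
    {M : Matrix (l ⊕ l) (l ⊕ l) R} (hM : M ∈ symplecticShears l R) :
    JoinedIn (symplecticShears l R) 1 M := by
  obtain ⟨X, hX, rfl | rfl⟩ := hM
  · have hcont : Continuous fun t : R ↦ (fromBlocks 1 (t • X) 0 1 : Matrix (l ⊕ l) (l ⊕ l) R) :=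
      continuous_const.matrix_fromBlocks (by fun_prop) continuous_const continuous_const
    have hmem (t : R) : fromBlocks 1 (t • X) 0 1 ∈ symplecticShears l R :=
      ⟨t • X, hX.smul t, .inl rfl⟩
    simpa using joinedIn_of_continuous hcont hmem 0 1
  · have hcont : Continuous fun t : R ↦ (fromBlocks 1 0 (t • X) 1 : Matrix (l ⊕ l) (l ⊕ l) R) :=
      continuous_const.matrix_fromBlocks continuous_const (by fun_prop) continuous_const
    have hmem (t : R) : fromBlocks 1 0 (t • X) 1 ∈ symplecticShears l R :=
      ⟨t • X, hX.smul t, .inr rfl⟩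
    simpa using joinedIn_of_continuous hcont hmem 0 1

variable [Fintype l]

theorem symplecticShears_subset_symplecticGroup :
    symplecticShears l R ⊆ symplecticGroup l R := by
  rintro _ ⟨X, hX, rfl | rfl⟩ <;>
    simp [SymplecticGroup.fromBlocks_mem_iff, hX.eq]

theorem upperShear_mem_closure {X : Matrix l l R} (hX : X.IsSymm) :
    fromBlocks 1 X 0 1 ∈ Submonoid.closure (symplecticShears l R) :=
  Submonoid.subset_closure ⟨X, hX, .inl rfl⟩

theorem lowerShear_mem_closure {X : Matrix l l R} (hX : X.IsSymm) :
    fromBlocks 1 0 X 1 ∈ Submonoid.closure (symplecticShears l R) :=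
  Submonoid.subset_closure ⟨X, hX, .inr rfl⟩

end Shears

section Levi

variable [Fintype l]

/-- The Levi factor `diag(A, A⁻ᵀ)`: the symplectic matrix through which an invertible `A` acts on
both Lagrangian blocks. It is used only for invertible `A`, as `A⁻¹` is `0` otherwise. -/
noncomputable def symplecticLevi [CommRing R] (A : Matrix l l R) : Matrix (l ⊕ l) (l ⊕ l) R :=
  fromBlocks A 0 0 A⁻¹ᵀ

theorem symplecticLevi_mul [CommRing R] (A B : Matrix l l R) :
    symplecticLevi (A * B) = symplecticLevi A * symplecticLevi B := by
  simp [symplecticLevi, fromBlocks_multiply, Matrix.mul_inv_rev]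

theorem weylElement_mem_closure [CommRing R] {S : Matrix l l R} (hS : S.IsSymm)
    (hdet : IsUnit S.det) :
    fromBlocks 0 S (-S⁻¹) 0 ∈ Submonoid.closure (symplecticShears l R) := by
  have hS' : (-S⁻¹).IsSymm := IsSymm.neg (by rw [IsSymm, transpose_nonsing_inv, hS.eq])
  have shear_product :
      fromBlocks 1 S 0 1 * fromBlocks 1 0 (-S⁻¹) 1 * fromBlocks 1 S 0 1 =
        fromBlocks 0 S (-S⁻¹) 0 := by
    simp [fromBlocks_multiply, mul_nonsing_inv _ hdet, nonsing_inv_mul _ hdet]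
  rw [← shear_product]
  exact mul_mem (mul_mem (upperShear_mem_closure hS) (lowerShear_mem_closure hS'))
    (upperShear_mem_closure hS)

theorem symplecticLevi_mem_closure_of_isSymm [CommRing R] {S : Matrix l l R} (hS : S.IsSymm)
    (hdet : IsUnit S.det) :
    symplecticLevi S ∈ Submonoid.closure (symplecticShears l R) := by
  have weyl_product :
      symplecticLevi S = fromBlocks 0 S (-S⁻¹) 0 * fromBlocks 0 (-1) (-(-1)⁻¹) 0 := by
    have neg_one_inv : (-1 : Matrix l l R)⁻¹ = -1 := inv_eq_right_inv (by simp)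
    simp [symplecticLevi, fromBlocks_multiply, neg_one_inv, transpose_nonsing_inv, hS.eq]
  rw [weyl_product]
  have hdet_neg_one : IsUnit (-1 : Matrix l l R).det := (isUnit_iff_isUnit_det _).1 isUnit_one.neg
  exact mul_mem (weylElement_mem_closure hS hdet)
    (weylElement_mem_closure isSymm_one.neg hdet_neg_one)

theorem isSymm_transvection_mul_swap [CommRing R] (i j : l) (c : R) :
    (transvection i j c * swap R i j).IsSymm := by
  have single_mul_swap : single i j c * swap R i j = single i i c := by
    ext a b
    simp only [swap, Equiv.Perm.permMatrix, PEquiv.mul_toMatrix_toPEquiv, submatrix_apply, id,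
      Equiv.symm_swap, single_apply, Equiv.swap_apply_def]
    grind
  rw [transvection, Matrix.add_mul, Matrix.one_mul, single_mul_swap]
  exact (isSymm_swap i j).add (by simp [IsSymm])

theorem symplecticLevi_transvection_mem_closure [CommRing R] {i j : l} (hij : i ≠ j) (c : R) :
    symplecticLevi (transvection i j c) ∈ Submonoid.closure (symplecticShears l R) := by
  have swap_sq : swap R i j * swap R i j = 1 := swap_mul_self i j
  have hswap : IsUnit (swap R i j).det := isUnit_det_of_left_inverse swap_sq
  have symm_product : transvection i j c = (transvection i j c * swap R i j) * swap R i j := by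
    rw [Matrix.mul_assoc, swap_sq, Matrix.mul_one]
  rw [symm_product, symplecticLevi_mul]
  refine mul_mem (symplecticLevi_mem_closure_of_isSymm (isSymm_transvection_mul_swap i j c) ?_)
    (symplecticLevi_mem_closure_of_isSymm (isSymm_swap i j) hswap)
  simpa [det_mul, hij] using hswap

theorem symplecticLevi_mem_closure [Field K] {A : Matrix l l K} (hA : A.det ≠ 0) :
    symplecticLevi A ∈ Submonoid.closure (symplecticShears l K) := by
  refine diagonal_transvection_induction_of_det_ne_zero
    (symplecticLevi · ∈ Submonoid.closure (symplecticShears l K)) A hA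
    (fun d hd ↦ symplecticLevi_mem_closure_of_isSymm (isSymm_diagonal d) hd.isUnit)
    (fun t ↦ symplecticLevi_transvection_mem_closure t.hij t.c) fun A B _ _ hA hB ↦ ?_
  exact symplecticLevi_mul A B ▸ mul_mem hA hB

end Levi

section Gauss

variable [Fintype l] [CommRing R] {A B C D : Matrix l l R}

theorem isSymm_mul_nonsing_inv [Invertible A] (h : Aᵀ * C = Cᵀ * A) : (C * A⁻¹).IsSymm := by
  calc (C * A⁻¹)ᵀ = Aᵀ⁻¹ * (Cᵀ * A) * A⁻¹ := by
        simp [transpose_nonsing_inv, Matrix.mul_assoc]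
    _ = C * A⁻¹ := by simp [← h]

theorem eq_lowerShear_mul_symplecticLevi_mul_upperShear [Invertible A]
    (h : fromBlocks A B C D ∈ symplecticGroup l R) :
    fromBlocks A B C D =
      fromBlocks 1 0 (C * A⁻¹) 1 * symplecticLevi A * fromBlocks 1 (A⁻¹ * B) 0 1 := by
  obtain ⟨hAC, -, hADCB⟩ := SymplecticGroup.fromBlocks_mem_iff.1 h
  have schur_complement : D - C * A⁻¹ * B = A⁻¹ᵀ := by
    rw [transpose_nonsing_inv]
    refine (inv_eq_right_inv ?_).symm
    calc Aᵀ * (D - C * A⁻¹ * B) = Aᵀ * D - Aᵀ * C * A⁻¹ * B := by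
          simp only [Matrix.mul_sub, Matrix.mul_assoc]
      _ = Aᵀ * D - Cᵀ * B := by simp [hAC]
      _ = 1 := hADCB
  rw [fromBlocks_eq_of_invertible₁₁ A B C D, invOf_eq_nonsing_inv, schur_complement,
    symplecticLevi]

theorem isSymm_nonsing_inv_mul_of_mem_symplecticGroup [Invertible A]
    (h : fromBlocks A B C D ∈ symplecticGroup l R) : (A⁻¹ * B).IsSymm := by
  have hT : fromBlocks Aᵀ Cᵀ Bᵀ Dᵀ ∈ symplecticGroup l R :=
    fromBlocks_transpose A B C D ▸ SymplecticGroup.transpose_mem h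
  simpa [transpose_nonsing_inv] using
    (isSymm_mul_nonsing_inv (SymplecticGroup.fromBlocks_mem_iff.1 hT).1).transpose

theorem eq_zero_of_mulVec_eq_zero_of_mem_symplecticGroup
    (h : fromBlocks A B C D ∈ symplecticGroup l R) {v : l → R} (hA : A *ᵥ v = 0)
    (hC : C *ᵥ v = 0) : v = 0 := by
  have hinj : Function.Injective (fromBlocks A B C D).mulVec :=
    mulVec_injective_of_isUnit ((isUnit_iff_isUnit_det _).2 (SymplecticGroup.symplectic_det h))
  have : Sum.elim v 0 = (0 : l ⊕ l → R) := hinj (by simp [fromBlocks_mulVec, hA, hC])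
  exact funext fun i ↦ congrFun this (.inl i)

end Gauss

section Generation

variable [Fintype l]

theorem exists_isSymm_det_diagonal_add_mul_ne_zero [CommRing R] [IsDomain R] {C : Matrix l l R}
    {d : l → R}
    (hdC : (diagonal d)ᵀ * C = Cᵀ * diagonal d)
    (hker : ∀ v, diagonal d *ᵥ v = 0 → C *ᵥ v = 0 → v = 0) :
    ∃ X : Matrix l l R, X.IsSymm ∧ (diagonal d + X * C).det ≠ 0 := by
  classical
  let e : l → R := fun i ↦ if d i = 0 then 1 else 0
  refine ⟨diagonal e, isSymm_diagonal e, fun hdet ↦ ?_⟩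
  obtain ⟨v, hv, hXv⟩ := exists_mulVec_eq_zero_iff.2 hdet
  have row (i : l) : d i * v i + e i * (C *ᵥ v) i = 0 := by
    simpa [add_mulVec, ← mulVec_mulVec, mulVec_diagonal] using congrFun hXv i
  have hdv (i : l) : d i * v i = 0 := by
    by_cases hi : d i = 0
    · simp [hi]
    · simpa [e, hi] using row i
  have hCv (i : l) : (C *ᵥ v) i = 0 := by
    by_cases hi : d i = 0
    · simpa [e, hi] using row i
    · refine (mul_eq_zero.1 ?_).resolve_left hi
      calc d i * (C *ᵥ v) i = (((diagonal d)ᵀ * C) *ᵥ v) i := by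
            simp [← mulVec_mulVec, mulVec_diagonal]
        _ = (Cᵀ *ᵥ (diagonal d *ᵥ v)) i := by rw [hdC, mulVec_mulVec]
        _ = 0 := by
            have : diagonal d *ᵥ v = 0 := funext fun j ↦ by simp [mulVec_diagonal, hdv]
            simp [this]
  exact hv (hker v (funext fun i ↦ by simp [mulVec_diagonal, hdv]) (funext hCv))

variable [Field K] {A B C D : Matrix l l K}

theorem exists_isSymm_det_add_mul_ne_zero (hAC : Aᵀ * C = Cᵀ * A)
    (hker : ∀ v, A *ᵥ v = 0 → C *ᵥ v = 0 → v = 0) :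
    ∃ X : Matrix l l K, X.IsSymm ∧ (A + X * C).det ≠ 0 := by
  obtain ⟨L, L', d, hd⟩ := Pivot.exists_list_transvec_mul_mul_list_transvec_eq_diagonal A
  set P := (L.map TransvectionStruct.toMatrix).prod
  set Q := (L'.map TransvectionStruct.toMatrix).prod
  have := P.invertibleOfIsUnitDet (by simp [P])
  have := Q.invertibleOfIsUnitDet (by simp [Q])
  have symm_diagonal : (diagonal d)ᵀ * (P⁻¹ᵀ * C * Q) = (P⁻¹ᵀ * C * Q)ᵀ * diagonal d := by
    calc (diagonal d)ᵀ * (P⁻¹ᵀ * C * Q) = Qᵀ * (Aᵀ * C) * Q := by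
          simp [← hd, Matrix.mul_assoc, transpose_nonsing_inv]
      _ = (P⁻¹ᵀ * C * Q)ᵀ * diagonal d := by
          simp [← hd, hAC, Matrix.mul_assoc]
  have ker_diagonal (v : l → K) (hdv : diagonal d *ᵥ v = 0) (hCv : (P⁻¹ᵀ * C * Q) *ᵥ v = 0) :
      v = 0 := by
    have hA : A *ᵥ (Q *ᵥ v) = 0 := by
      refine mulVec_injective_of_invertible P ?_
      simpa [← hd, mulVec_mulVec, Matrix.mul_assoc] using hdv
    have hC : C *ᵥ (Q *ᵥ v) = 0 := by
      refine mulVec_injective_of_invertible P⁻¹ᵀ ?_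
      simpa [mulVec_mulVec, Matrix.mul_assoc] using hCv
    exact mulVec_injective_of_invertible Q (by simpa using hker _ hA hC)
  obtain ⟨X, hX, hdet⟩ := exists_isSymm_det_diagonal_add_mul_ne_zero symm_diagonal ker_diagonal
  have conj : P * (A + P⁻¹ * X * P⁻¹ᵀ * C) * Q = diagonal d + X * (P⁻¹ᵀ * C * Q) := by
    simp [← hd, Matrix.mul_add, Matrix.add_mul, Matrix.mul_assoc]
  refine ⟨P⁻¹ * X * P⁻¹ᵀ, by simp [IsSymm, hX.eq, Matrix.mul_assoc], fun hzero ↦ hdet ?_⟩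
  rw [← conj, det_mul, det_mul, hzero, mul_zero, zero_mul]

theorem mem_closure_symplecticShears_of_det_ne_zero
    (h : fromBlocks A B C D ∈ symplecticGroup l K) (hA : A.det ≠ 0) :
    fromBlocks A B C D ∈ Submonoid.closure (symplecticShears l K) := by
  have := A.invertibleOfIsUnitDet hA.isUnit
  have hlower : (C * A⁻¹).IsSymm :=
    isSymm_mul_nonsing_inv (SymplecticGroup.fromBlocks_mem_iff.1 h).1
  have hupper : (A⁻¹ * B).IsSymm := isSymm_nonsing_inv_mul_of_mem_symplecticGroup h
  rw [eq_lowerShear_mul_symplecticLevi_mul_upperShear h]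
  exact mul_mem (mul_mem (lowerShear_mem_closure hlower) (symplecticLevi_mem_closure hA))
    (upperShear_mem_closure hupper)

variable (l K) in
theorem closure_symplecticShears :
    Submonoid.closure (symplecticShears l K) = symplecticGroup l K := by
  refine le_antisymm (Submonoid.closure_le.2 symplecticShears_subset_symplecticGroup) fun M hM ↦ ?_
  obtain ⟨A, B, C, D, rfl⟩ : ∃ A B C D, M = fromBlocks A B C D :=
    ⟨_, _, _, _, (fromBlocks_toBlocks M).symm⟩
  obtain ⟨X, hX, hdet⟩ := exists_isSymm_det_add_mul_ne_zero
    (SymplecticGroup.fromBlocks_mem_iff.1 hM).1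
    fun _ ↦ eq_zero_of_mulVec_eq_zero_of_mem_symplecticGroup hM
  have sheared : fromBlocks 1 X 0 1 * fromBlocks A B C D =
      fromBlocks (A + X * C) (B + X * D) C D := by
    simp [fromBlocks_multiply]
  have sheared_mem : fromBlocks (A + X * C) (B + X * D) C D ∈ symplecticGroup l K :=
    sheared ▸ mul_mem (symplecticShears_subset_symplecticGroup ⟨X, hX, .inl rfl⟩) hM
  have unsheared : fromBlocks 1 (-X) 0 1 * fromBlocks (A + X * C) (B + X * D) C D =
      fromBlocks A B C D := by
    simp [fromBlocks_multiply]
  rw [← unsheared]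
  exact mul_mem (upperShear_mem_closure hX.neg)
    (mem_closure_symplecticShears_of_det_ne_zero sheared_mem hdet)

end Generation

theorem symplectic_group_path_connected_general (l K : Type*) [DecidableEq l] [Fintype l] [Field K]
    [TopologicalSpace K] [IsTopologicalRing K] [PathConnectedSpace K] :
    IsPathConnected (symplecticGroup l K : Set (Matrix (l ⊕ l) (l ⊕ l) K)) :=
  closure_symplecticShears l K ▸
    isPathConnected_submonoidClosure_of_joinedIn_one fun _ ↦ joinedIn_symplecticShears

/-- The real symplectic group `Sp(2n, ℝ)` is path-connected: every real symplectic
matrix `K` is joined to the identity by a continuous path of symplectic matrices. -/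
theorem symplectic_group_path_connected
    (n : ℕ) (K : Matrix (Fin n ⊕ Fin n) (Fin n ⊕ Fin n) ℝ)
    (hK : Kᵀ * (Matrix.fromBlocks 0 (-1) 1 0 : Matrix (Fin n ⊕ Fin n) (Fin n ⊕ Fin n) ℝ) * K
        = Matrix.fromBlocks 0 (-1) 1 0) :
    ∃ γ : Set.Icc (0:ℝ) 1 → Matrix (Fin n ⊕ Fin n) (Fin n ⊕ Fin n) ℝ,
      Continuous γ ∧
      (∀ t, (γ t)ᵀ * (Matrix.fromBlocks 0 (-1) 1 0 : Matrix (Fin n ⊕ Fin n) (Fin n ⊕ Fin n) ℝ)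
          * γ t = Matrix.fromBlocks 0 (-1) 1 0) ∧
      γ ⟨0, by norm_num⟩ = 1 ∧ γ ⟨1, by norm_num⟩ = K := by
  obtain ⟨p, hp⟩ := (symplectic_group_path_connected_general (Fin n) ℝ).joinedIn
    1 (one_mem _) K (SymplecticGroup.mem_iff'.2 hK)
  exact ⟨p, p.continuous, fun t ↦ SymplecticGroup.mem_iff'.1 (hp t), p.source, p.target⟩
end

section
/- Let H be a complex Hilbert space, T₀ > 0 and h > 0. Let A : [0, T₀] → B(H) be a continuous family of bounded self-adjoint operators, let f : [0, T₀] → H be continuous, and let u : [0, T₀] → H be continuously differentiable with (h/i) u′(y) − A(y) u(y) = f(y) for all y ∈ [0, T₀]. Then sup_{0 ≤ y ≤ T₀} ‖u(y)‖ ≤ ‖u(0)‖ + h⁻¹ ∫₀^{T₀} ‖f(y)‖ dy. -/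
/-!
Pairing the equation with `u` and taking imaginary parts removes `A`, because `⟪u, A u⟫` is real;
what is left is `h Re ⟪u, u'⟫ = -Im ⟪u, f⟫ ≤ ‖u‖ ‖f‖`. Formally this says `h ‖u‖' ≤ ‖f‖`, and
integrating gives the estimate. Since the norm is not differentiable at the zeros of `u`, one
integrates the derivative of `√(‖u‖² + ε²)` instead and lets `ε → 0`.
-/

open Set MeasureTheory
open scoped InnerProductSpace

lemma le_sqrt_sq_add_sq (x y : ℝ) : x ≤ √(x ^ 2 + y ^ 2) :=
  Real.le_sqrt_of_sq_le (le_add_of_nonneg_right (sq_nonneg y))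

lemma sqrt_sq_add_sq_le_add {x y : ℝ} (hx : 0 ≤ x) (hy : 0 ≤ y) : √(x ^ 2 + y ^ 2) ≤ x + y :=
  Real.sqrt_le_iff.mpr ⟨add_nonneg hx hy, by linarith [add_sq x y, mul_nonneg hx hy]⟩

section NormGrowth

variable {E : Type*} [NormedAddCommGroup E] [InnerProductSpace ℝ E]

lemma hasDerivWithinAt_sqrt_norm_sq_add_sq {u : ℝ → E} {v : E} {s : Set ℝ} {t ε : ℝ}
    (hε : ε ≠ 0) (hu : HasDerivWithinAt u v s t) :
    HasDerivWithinAt (fun x ↦ √(‖u x‖ ^ 2 + ε ^ 2)) (⟪u t, v⟫_ℝ / √(‖u t‖ ^ 2 + ε ^ 2)) s t := by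
  convert (hu.norm_sq.add_const (ε ^ 2)).sqrt (by positivity) using 1
  rw [mul_div_mul_left _ _ two_ne_zero]

theorem norm_le_norm_add_integral_of_inner_le {u u' : ℝ → E} {φ : ℝ → ℝ} {a b : ℝ} (hab : a ≤ b)
    (hu : ContinuousOn u (Icc a b))
    (hu' : ∀ t ∈ Ioo a b, HasDerivWithinAt u (u' t) (Ioi t) t)
    (hφ : IntegrableOn φ (Icc a b)) (hφ_nonneg : ∀ t ∈ Ioo a b, 0 ≤ φ t)
    (hinner : ∀ t ∈ Ioo a b, ⟪u t, u' t⟫_ℝ ≤ ‖u t‖ * φ t) :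
    ‖u b‖ ≤ ‖u a‖ + ∫ t in a..b, φ t := by
  refine le_of_forall_pos_le_add fun ε hε ↦ ?_
  let N : ℝ → ℝ := fun t ↦ √(‖u t‖ ^ 2 + ε ^ 2)
  have hN_pos (t : ℝ) : 0 < N t := Real.sqrt_pos.mpr (by positivity)
  have hN_cont : ContinuousOn N (Icc a b) := by fun_prop
  have hN_deriv_le : ∀ t ∈ Ioo a b, ⟪u t, u' t⟫_ℝ / N t ≤ φ t := fun t ht ↦ by
    rw [div_le_iff₀' (hN_pos t)]
    exact (hinner t ht).trans <|
      mul_le_mul_of_nonneg_right (le_sqrt_sq_add_sq ‖u t‖ ε) (hφ_nonneg t ht)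
  have hN_growth : N b - N a ≤ ∫ t in a..b, φ t :=
    intervalIntegral.sub_le_integral_of_hasDeriv_right_of_le hab hN_cont
      (fun t ht ↦ hasDerivWithinAt_sqrt_norm_sq_add_sq hε.ne' (hu' t ht)) hφ hN_deriv_le
  calc ‖u b‖ ≤ N b := le_sqrt_sq_add_sq ‖u b‖ ε
    _ ≤ N a + ∫ t in a..b, φ t := sub_le_iff_le_add'.mp hN_growth
    _ ≤ ‖u a‖ + ε + ∫ t in a..b, φ t := by gcongr; exact sqrt_sq_add_sq_le_add (norm_nonneg _) hε.le
    _ = ‖u a‖ + (∫ t in a..b, φ t) + ε := add_right_comm _ _ _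

end NormGrowth

section Semiclassical

variable {H : Type*} [NormedAddCommGroup H] [InnerProductSpace ℂ H]

lemma im_inner_div_I_smul_sub {A : H →ₗ[ℂ] H} (hA : A.IsSymmetric) (h : ℝ) (x v : H) :
    (⟪x, ((h : ℂ) / Complex.I) • v - A x⟫_ℂ).im = -(h * (⟪x, v⟫_ℂ).re) := by
  have him : (⟪x, A x⟫_ℂ).im = 0 := hA.im_inner_self_apply x
  simp [inner_smul_right, him]

lemma re_inner_le_of_semiclassical_eq {A : H →ₗ[ℂ] H} (hA : A.IsSymmetric) {h : ℝ} (hh : h ≠ 0)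
    {x v f : H} (heq : ((h : ℂ) / Complex.I) • v - A x = f) :
    (⟪x, v⟫_ℂ).re ≤ ‖x‖ * (|h|⁻¹ * ‖f‖) := by
  have hre : h * (⟪x, v⟫_ℂ).re = -(⟪x, f⟫_ℂ).im := by
    rw [← heq, im_inner_div_I_smul_sub hA, neg_neg]
  have hmul : |h| * |(⟪x, v⟫_ℂ).re| ≤ ‖x‖ * ‖f‖ :=
    calc |h| * |(⟪x, v⟫_ℂ).re| = |(⟪x, f⟫_ℂ).im| := by rw [← abs_mul, hre, abs_neg]
      _ ≤ ‖⟪x, f⟫_ℂ‖ := Complex.abs_im_le_norm _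
      _ ≤ ‖x‖ * ‖f‖ := norm_inner_le_norm x f
  calc (⟪x, v⟫_ℂ).re ≤ |(⟪x, v⟫_ℂ).re| := le_abs_self _
    _ ≤ |h|⁻¹ * (‖x‖ * ‖f‖) := (le_inv_mul_iff₀ (abs_pos.mpr hh)).mpr hmul
    _ = ‖x‖ * (|h|⁻¹ * ‖f‖) := mul_left_comm _ _ _

theorem semiclassical_energy_estimate_general {T₀ h : ℝ} (hh : h ≠ 0)
    {A : ℝ → H →ₗ[ℂ] H} (hA : ∀ y ∈ Icc 0 T₀, (A y).IsSymmetric)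
    {f : ℝ → H} (hf : IntegrableOn f (Icc 0 T₀)) {u u' : ℝ → H}
    (hu : ∀ y ∈ Icc 0 T₀, HasDerivWithinAt u (u' y) (Icc 0 T₀) y)
    (heq : ∀ y ∈ Icc 0 T₀, ((h : ℂ) / Complex.I) • u' y - A y (u y) = f y) :
    ∀ y ∈ Icc 0 T₀, ‖u y‖ ≤ ‖u 0‖ + |h|⁻¹ * ∫ t in 0..T₀, ‖f t‖ := by
  intro y hy
  let _ : InnerProductSpace ℝ H := InnerProductSpace.complexToReal
  have hsub : Icc 0 y ⊆ Icc 0 T₀ := Icc_subset_Icc_right hy.2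
  have hmem : ∀ t ∈ Ioo 0 y, t ∈ Icc 0 T₀ := fun t ht ↦ hsub (Ioo_subset_Icc_self ht)
  have hgrowth : ‖u y‖ ≤ ‖u 0‖ + ∫ t in 0..y, |h|⁻¹ * ‖f t‖ :=
    norm_le_norm_add_integral_of_inner_le hy.1
      (fun t ht ↦ (hu t (hsub ht)).continuousWithinAt.mono hsub)
      (fun t ht ↦ ((hu t (hmem t ht)).hasDerivAt
        (Icc_mem_nhds ht.1 (ht.2.trans_le hy.2))).hasDerivWithinAt)
      ((hf.mono_set hsub).norm.const_mul _) (fun t _ ↦ by positivity)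
      fun t ht ↦ re_inner_le_of_semiclassical_eq (hA t (hmem t ht)) hh (heq t (hmem t ht))
  have hmono : ∫ t in 0..y, ‖f t‖ ≤ ∫ t in 0..T₀, ‖f t‖ :=
    intervalIntegral.integral_mono_interval le_rfl hy.1 hy.2 (ae_of_all _ fun t ↦ norm_nonneg _)
      ((intervalIntegrable_iff_integrableOn_Icc_of_le (hy.1.trans hy.2)).mpr hf).norm
  rw [intervalIntegral.integral_const_mul] at hgrowth
  exact hgrowth.trans (by gcongr)

end Semiclassical

/-- Energy estimate for the semiclassical Cauchy problem `(h/i) u′ − A(y) u = f` with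
a continuous family of bounded self-adjoint operators `A(y)` on a complex Hilbert
space: `sup_{0 ≤ y ≤ T₀} ‖u(y)‖ ≤ ‖u(0)‖ + h⁻¹ ∫₀^{T₀} ‖f(y)‖ dy`. -/
theorem semiclassical_energy_estimate
    {H : Type*} [NormedAddCommGroup H] [InnerProductSpace ℂ H] [CompleteSpace H]
    (T₀ h : ℝ) (hT₀ : 0 < T₀) (hh : 0 < h)
    (A : ℝ → H →L[ℂ] H) (hAcont : ContinuousOn A (Set.Icc 0 T₀))
    (hAsa : ∀ y ∈ Set.Icc (0:ℝ) T₀, IsSelfAdjoint (A y))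
    (f : ℝ → H) (hf : ContinuousOn f (Set.Icc 0 T₀))
    (u u' : ℝ → H)
    (hu : ∀ y ∈ Set.Icc (0:ℝ) T₀, HasDerivWithinAt u (u' y) (Set.Icc 0 T₀) y)
    (hu' : ContinuousOn u' (Set.Icc 0 T₀))
    (heq : ∀ y ∈ Set.Icc (0:ℝ) T₀, ((h : ℂ) / Complex.I) • u' y - A y (u y) = f y) :
    ∀ y ∈ Set.Icc (0:ℝ) T₀, ‖u y‖ ≤ ‖u 0‖ + h⁻¹ * ∫ t in (0:ℝ)..T₀, ‖f t‖ := by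
  simpa only [abs_of_pos hh] using semiclassical_energy_estimate_general hh.ne'
    (fun y hy ↦ (hAsa y hy).isSymmetric) hf.integrableOn_Icc hu heq
end

section
/- Let n ≥ 1 and let A : [0,1] → M_n(ℝ) be smooth, and let φ : [0,1] → M_n(ℝ) be the fundamental solution: φ′(t) = A(t) φ(t) for all t ∈ [0,1], φ(0) = I. Then there exist a smooth B : [0,1] → M_n(ℝ) whose support is a compact subset of the open interval (0,1), and a smooth ψ : [0,1] → M_n(ℝ), such that ψ′(t) = B(t) ψ(t) for all t ∈ [0,1], ψ(0) = I, and ψ(1) = φ(1). -/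
/-!
A smooth reparametrization `g` of `[a, b]` that fixes both endpoints and is locally constant near
them turns a solution of `φ' = A φ` into the solution `φ ∘ g` of `ψ' = B ψ` with
`B t = g' t • A (g t)`: the values at the endpoints are kept, and `B` vanishes wherever `g'` does.
Bootstrapping the equation `φ' = A φ` makes `φ`, and so `φ ∘ g`, as smooth as `A` allows.
-/

attribute [local instance] Matrix.normedAddCommGroup Matrix.normedSpace

open Set Function
open scoped ContDiff

section Regularity

variable {𝕜 E F : Type*} [NontriviallyNormedField 𝕜]
  [NormedAddCommGroup E] [NormedSpace 𝕜 E] [NormedAddCommGroup F] [NormedSpace 𝕜 F]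
  {s : Set 𝕜} {k : ℕ∞}

theorem contDiffOn_succ_of_hasDerivWithinAt {v : 𝕜 → E → E} {α : 𝕜 → E} {u : Set E}
    (hs : UniqueDiffOn 𝕜 s) (hv : ContDiffOn 𝕜 k (uncurry v) (s ×ˢ u))
    (hα : ∀ t ∈ s, HasDerivWithinAt α (v t (α t)) s t) (hαu : MapsTo α s u) :
    ContDiffOn 𝕜 (k + 1) α s := by
  have bootstrap {m : ℕ∞} (hmk : m ≤ k) (hm : ContDiffOn 𝕜 m α s) :
      ContDiffOn 𝕜 (m + 1) α s := by
    have hv_comp : ContDiffOn 𝕜 m (fun t ↦ v t (α t)) s :=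
      (hv.of_le (mod_cast hmk)).comp (contDiffOn_id.prodMk hm) fun t ht ↦ ⟨ht, hαu ht⟩
    rw [contDiffOn_succ_iff_derivWithin hs]
    exact ⟨fun t ht ↦ (hα t ht).differentiableWithinAt, by simp,
      hv_comp.congr fun t ht ↦ (hα t ht).derivWithin (hs t ht)⟩
  suffices ContDiffOn 𝕜 k α s from bootstrap le_rfl this
  refine contDiffOn_iff_forall_nat_le.2 fun m hm ↦ ?_
  induction m with
  | zero => exact contDiffOn_zero.2 fun t ht ↦ (hα t ht).continuousWithinAt
  | succ m ih =>
    have hmk : (m : ℕ∞) ≤ k := le_trans (mod_cast m.le_succ) hm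
    exact_mod_cast bootstrap hmk (ih hmk)

theorem contDiffOn_succ_of_hasDerivWithinAt_bilinear (L : F →L[𝕜] E →L[𝕜] E)
    {A : 𝕜 → F} {φ : 𝕜 → E} (hs : UniqueDiffOn 𝕜 s) (hA : ContDiffOn 𝕜 k A s)
    (hφ : ∀ t ∈ s, HasDerivWithinAt φ (L (A t) (φ t)) s t) :
    ContDiffOn 𝕜 (k + 1) φ s := by
  have hv : ContDiffOn 𝕜 k (uncurry fun t x ↦ L (A t) x) (s ×ˢ univ) :=
    (L.contDiff.comp_contDiffOn (hA.comp contDiffOn_fst fun _ h ↦ h.1)).clm_apply contDiffOn_snd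
  exact contDiffOn_succ_of_hasDerivWithinAt hs hv hφ (mapsTo_univ _ _)

end Regularity

section Reparametrization

variable {E F : Type*} [NormedAddCommGroup E] [NormedSpace ℝ E]
  [NormedAddCommGroup F] [NormedSpace ℝ F] {a b : ℝ}

theorem tsupport_deriv_subset_Icc_of_eqOn_const {f : ℝ → E} {x y : E}
    (hx : EqOn f (fun _ ↦ x) (Iio a)) (hy : EqOn f (fun _ ↦ y) (Ioi b)) :
    tsupport (deriv f) ⊆ Icc a b := by
  refine closure_minimal (fun t ht ↦ ?_) isClosed_Icc
  by_contra h
  rcases not_and_or.1 h with hta | htb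
  · exact ht (by simpa using hx.deriv isOpen_Iio (not_le.1 hta))
  · exact ht (by simpa using hy.deriv isOpen_Ioi (not_le.1 htb))

theorem exists_contDiff_mem_Icc_tsupport_deriv_subset_Ioo (hab : a < b) :
    ∃ g : ℝ → ℝ, ContDiff ℝ ∞ g ∧ (∀ t, g t ∈ Icc a b) ∧ g a = a ∧ g b = b ∧
      tsupport (deriv g) ⊆ Ioo a b := by
  obtain ⟨c, hac, hcb⟩ := exists_between hab
  obtain ⟨d, hcd, hdb⟩ := exists_between hcb
  let g (t : ℝ) : ℝ := AffineMap.lineMap a b (Real.smoothTransition ((t - c) / (d - c)))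
  have g_eq_left {t : ℝ} (ht : t ≤ c) : g t = a := by
    have : (t - c) / (d - c) ≤ 0 :=
      div_nonpos_of_nonpos_of_nonneg (sub_nonpos.2 ht) (sub_pos.2 hcd).le
    simp [g, Real.smoothTransition.zero_of_nonpos this]
  have g_eq_right {t : ℝ} (ht : d ≤ t) : g t = b := by
    have : 1 ≤ (t - c) / (d - c) := (one_le_div (sub_pos.2 hcd)).2 (sub_le_sub_right ht c)
    simp [g, Real.smoothTransition.one_of_one_le this]
  have g_mem (t : ℝ) : g t ∈ Icc a b :=
    (convex_Icc a b).lineMap_mem (left_mem_Icc.2 hab.le) (right_mem_Icc.2 hab.le)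
      ⟨Real.smoothTransition.nonneg _, Real.smoothTransition.le_one _⟩
  have g_contDiff : ContDiff ℝ ∞ g := by
    simp only [g, AffineMap.lineMap_apply_module']
    fun_prop
  refine ⟨g, g_contDiff, g_mem, g_eq_left hac.le, g_eq_right hdb.le, ?_⟩
  calc tsupport (deriv g)
      ⊆ Icc c d := tsupport_deriv_subset_Icc_of_eqOn_const
        (fun _ ht ↦ g_eq_left (le_of_lt ht)) fun _ ht ↦ g_eq_right (le_of_lt ht)
    _ ⊆ Ioo a b := Icc_subset_Ioo hac hdb

/-- The coefficient acts through a bilinear map `L` because no normed algebra is at hand in the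
matrix case: the entrywise sup norm is not submultiplicative. -/
theorem ode_compactly_supported_deformation_general (L : F →L[ℝ] E →L[ℝ] E) (hab : a < b)
    {k : ℕ∞} {A : ℝ → F} {φ : ℝ → E} (hA : ContDiffOn ℝ k A (Icc a b))
    (hφ : ∀ t ∈ Icc a b, HasDerivWithinAt φ (L (A t) (φ t)) (Icc a b) t) :
    ∃ (B : ℝ → F) (ψ : ℝ → E),
      ContDiff ℝ k B ∧ HasCompactSupport B ∧ tsupport B ⊆ Ioo a b ∧
      ContDiff ℝ (k + 1) ψ ∧ (∀ t, HasDerivAt ψ (L (B t) (ψ t)) t) ∧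
      ψ a = φ a ∧ ψ b = φ b := by
  obtain ⟨g, hg, g_mem, hga, hgb, hg_supp⟩ :=
    exists_contDiff_mem_Icc_tsupport_deriv_subset_Ioo hab
  have hg' : ContDiff ℝ ∞ (deriv g) := (contDiff_infty_iff_deriv.1 hg).2
  have coe_le_infty {m : ℕ∞} : (m : ℕ∞ω) ≤ ∞ := mod_cast le_top
  have hφ_contDiff : ContDiffOn ℝ (k + 1) φ (Icc a b) :=
    contDiffOn_succ_of_hasDerivWithinAt_bilinear L (uniqueDiffOn_Icc hab) hA hφ
  have hB_supp : tsupport (fun t ↦ deriv g t • A (g t)) ⊆ Ioo a b :=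
    (tsupport_smul_subset_left (deriv g) (A ∘ g)).trans hg_supp
  have hψ (t : ℝ) : HasDerivAt (φ ∘ g) (L (deriv g t • A (g t)) (φ (g t))) t := by
    have hgt : HasDerivAt g (deriv g t) t := (hg.differentiable (by simp) t).hasDerivAt
    simpa using (hφ (g t) (g_mem t)).scomp_hasDerivAt t hgt g_mem
  exact ⟨fun t ↦ deriv g t • A (g t), φ ∘ g,
    (hg'.of_le coe_le_infty).smul (hA.comp_contDiff (hg.of_le coe_le_infty) g_mem),
    isCompact_Icc.of_isClosed_subset (isClosed_tsupport _) (hB_supp.trans Ioo_subset_Icc_self),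
    hB_supp, hφ_contDiff.comp_contDiff (hg.of_le (coe_le_infty (m := k + 1))) g_mem, hψ,
    congrArg φ hga, congrArg φ hgb⟩

end Reparametrization

/-- Reparametrization of a fundamental solution: if `φ′(t) = A(t) φ(t)` on `[0,1]`
with `φ(0) = I`, then there are a smooth `B : [0,1] → M_n(ℝ)` whose support is a
compact subset of `(0,1)` and a smooth `ψ` with `ψ′(t) = B(t) ψ(t)`, `ψ(0) = I`,
`ψ(1) = φ(1)`. -/
theorem ode_compactly_supported_deformation
    (n : ℕ) (hn : 1 ≤ n)
    (A : ℝ → Matrix (Fin n) (Fin n) ℝ)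
    (hA : ContDiffOn ℝ (⊤ : ℕ∞) A (Set.Icc 0 1))
    (φ : ℝ → Matrix (Fin n) (Fin n) ℝ)
    (hφ : ∀ t ∈ Set.Icc (0:ℝ) 1, HasDerivWithinAt φ (A t * φ t) (Set.Icc 0 1) t)
    (hφ0 : φ 0 = 1) :
    ∃ B ψ : ℝ → Matrix (Fin n) (Fin n) ℝ,
      ContDiffOn ℝ (⊤ : ℕ∞) B (Set.Icc 0 1) ∧
      (∃ K : Set ℝ, IsCompact K ∧ K ⊆ Set.Ioo 0 1 ∧
        ∀ t ∈ Set.Icc (0:ℝ) 1, t ∉ K → B t = 0) ∧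
      ContDiffOn ℝ (⊤ : ℕ∞) ψ (Set.Icc 0 1) ∧
      (∀ t ∈ Set.Icc (0:ℝ) 1, HasDerivWithinAt ψ (B t * ψ t) (Set.Icc 0 1) t) ∧
      ψ 0 = 1 ∧ ψ 1 = φ 1 := by
  obtain ⟨B, ψ, hB, hB_compact, hB_supp, hψ, hψ_deriv, hψ0, hψ1⟩ :=
    ode_compactly_supported_deformation_general
      (LinearMap.mul ℝ (Matrix (Fin n) (Fin n) ℝ)).toContinuousBilinearMap one_pos hA hφ
  exact ⟨B, ψ, hB.contDiffOn,
    ⟨tsupport B, hB_compact, hB_supp, fun t _ ↦ image_eq_zero_of_notMem_tsupport⟩,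
    (hψ.of_le le_self_add).contDiffOn, fun t _ ↦ (hψ_deriv t).hasDerivWithinAt,
    hψ0.trans hφ0, hψ1⟩
end

section
/- Let n ≥ 2, let b : ℝ × ℝ^{n−1} × ℝ^{n−1} → ℝ be smooth and everywhere positive, and set p(x₁, x′, ξ₁, ξ′) = ξ₁² − b(x₁, x′, ξ′)² on ℝ^{2n}. Fix (x₀′, ξ₀′) ∈ ℝ^{n−1} × ℝ^{n−1}. Suppose (y′, η′) : I → ℝ^{n−1} × ℝ^{n−1}, defined on an interval I containing 0, solves the reduced Hamiltonian system d y′/ds = −∂_{ξ′} b(s, y′(s), η′(s)), d η′/ds = ∂_{x′} b(s, y′(s), η′(s)), with y′(0) = x₀′, η′(0) = ξ₀′. Define t(s) = ∫₀^s (2 b(σ, y′(σ), η′(σ)))⁻¹ dσ. Suppose (x(t), ξ(t)) solves Hamilton's equations ẋ = ∂_ξ p, ξ̇ = −∂_x p, with initial data x(0) = (0, x₀′), ξ(0) = (b(0, x₀′, ξ₀′), ξ₀′), defined on t(I). Then for every s ∈ I: x₁(t(s)) = s, x′(t(s)) = y′(s), ξ₁(t(s)) = b(s, y′(s), η′(s)),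 and ξ′(t(s)) = η′(s). -/
/-!
On the hypersurface `{ξ₁ = b}` the Hamiltonian vector field of `p = ξ₁² - b²` equals `2b` times
`(1, -∂_{ξ′}b, ∂_{x₁}b, ∂_{x′}b)`. Along the reduced flow the contributions of `y′` and `η′` to
`db/ds` cancel, leaving `db/ds = ∂_{x₁}b`, so this last vector is the velocity of the lifted curve
`s ↦ (s, y′(s), b(s, y′(s), η′(s)), η′(s))`. Since `dt/ds = (2b)⁻¹`, the lifted curve and
`s ↦ (x, ξ)(t(s))` solve the same non-autonomous system `dz/ds = (2b)⁻¹ H_p(z)` and start at the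
same point; uniqueness for ordinary differential equations identifies them.
-/

open Set MeasureTheory Topology
open scoped NNReal

section IntervalCalculus

variable {E : Type*} [NormedAddCommGroup E] [NormedSpace ℝ E] {I : Set ℝ} {s₀ : ℝ}

lemma hasDerivWithinAt_integral_of_ordConnected [CompleteSpace E] (hI : I.OrdConnected)
    (hs₀ : s₀ ∈ I) {c : ℝ → E} (hc : ContinuousOn c I) {s : ℝ} (hs : s ∈ I) :
    HasDerivWithinAt (fun u => ∫ σ in s₀..u, c σ) (c s) I s := by
  have hint : ∀ {a b}, a ∈ I → b ∈ I → IntervalIntegrable c volume a b := fun ha hb =>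
    (hc.mono (hI.uIcc_subset ha hb)).intervalIntegrable
  rw [hasDerivWithinAt_iff_isLittleO, Asymptotics.isLittleO_iff]
  intro ε hε
  obtain ⟨δ, hδ, hclose⟩ := Metric.continuousWithinAt_iff.1 (hc s hs) ε hε
  filter_upwards [self_mem_nhdsWithin, nhdsWithin_le_nhds (Metric.ball_mem_nhds s hδ)] with u hu hus
  have hdiff : (∫ σ in s₀..u, c σ) - (∫ σ in s₀..s, c σ) - (u - s) • c s
      = ∫ σ in s..u, (c σ - c s) := by
    rw [intervalIntegral.integral_interval_sub_left (hint hs₀ hu) (hint hs₀ hs),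
      intervalIntegral.integral_sub (hint hs hu) intervalIntegrable_const,
      intervalIntegral.integral_const]
  rw [hdiff, Real.norm_eq_abs]
  refine intervalIntegral.norm_integral_le_of_norm_le_const fun σ hσ => ?_
  have hσ' := uIoc_subset_uIcc hσ
  rw [← dist_eq_norm]
  refine (hclose (hI.uIcc_subset hs hu hσ') ?_).le
  exact (abs_sub_left_of_mem_uIcc hσ').trans_lt hus

lemma ODE_solution_unique_of_ordConnected (hI : I.OrdConnected) (hs₀ : s₀ ∈ I)
    {v : ℝ → E → E} {S : ℝ → Set E} {K : ℝ≥0} (hv : ∀ s ∈ I, LipschitzOnWith K (v s) (S s))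
    {f g : ℝ → E} (hf : ∀ s ∈ I, HasDerivWithinAt f (v s (f s)) I s) (hfS : ∀ s ∈ I, f s ∈ S s)
    (hg : ∀ s ∈ I, HasDerivWithinAt g (v s (g s)) I s) (hgS : ∀ s ∈ I, g s ∈ S s)
    (h₀ : f s₀ = g s₀) : EqOn f g I := by
  have hfc : ContinuousOn f I := fun s hs => (hf s hs).continuousWithinAt
  have hgc : ContinuousOn g I := fun s hs => (hg s hs).continuousWithinAt
  intro s hs
  rcases le_total s₀ s with hle | hle
  · have hsub : Icc s₀ s ⊆ I := hI.out hs₀ hs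
    have hmem : ∀ r ∈ Ico s₀ s, r ∈ I := fun r hr => hsub (Ico_subset_Icc_self hr)
    have hnhds : ∀ r ∈ Ico s₀ s, I ∈ 𝓝[≥] r := fun r hr =>
      Filter.mem_of_superset (Icc_mem_nhdsGE_of_mem hr) hsub
    exact ODE_solution_unique_of_mem_Icc_right (fun r hr => hv r (hmem r hr))
      (hfc.mono hsub) (fun r hr => (hf r (hmem r hr)).mono_of_mem_nhdsWithin (hnhds r hr))
      (fun r hr => hfS r (hmem r hr))
      (hgc.mono hsub) (fun r hr => (hg r (hmem r hr)).mono_of_mem_nhdsWithin (hnhds r hr))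
      (fun r hr => hgS r (hmem r hr)) h₀ (right_mem_Icc.2 hle)
  · have hsub : Icc s s₀ ⊆ I := hI.out hs hs₀
    have hmem : ∀ r ∈ Ioc s s₀, r ∈ I := fun r hr => hsub (Ioc_subset_Icc_self hr)
    have hnhds : ∀ r ∈ Ioc s s₀, I ∈ 𝓝[≤] r := fun r hr =>
      Filter.mem_of_superset (Icc_mem_nhdsLE_of_mem hr) hsub
    exact ODE_solution_unique_of_mem_Icc_left (fun r hr => hv r (hmem r hr))
      (hfc.mono hsub) (fun r hr => (hf r (hmem r hr)).mono_of_mem_nhdsWithin (hnhds r hr))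
      (fun r hr => hfS r (hmem r hr))
      (hgc.mono hsub) (fun r hr => (hg r (hmem r hr)).mono_of_mem_nhdsWithin (hnhds r hr))
      (fun r hr => hgS r (hmem r hr)) h₀ (left_mem_Icc.2 hle)

lemma eqOn_of_hasDerivWithinAt_smul_of_locallyLipschitz (hI : I.OrdConnected) (hs₀ : s₀ ∈ I)
    {c : ℝ → ℝ} (hc : ContinuousOn c I) {H : E → E} (hH : LocallyLipschitz H) {f g : ℝ → E}
    (hf : ∀ s ∈ I, HasDerivWithinAt f (c s • H (f s)) I s)
    (hg : ∀ s ∈ I, HasDerivWithinAt g (c s • H (g s)) I s) (h₀ : f s₀ = g s₀) : EqOn f g I := by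
  intro s hs
  have hJ : uIcc s₀ s ⊆ I := hI.uIcc_subset hs₀ hs
  have hfJ : ∀ r ∈ uIcc s₀ s, HasDerivWithinAt f (c r • H (f r)) (uIcc s₀ s) r := fun r hr =>
    (hf r (hJ hr)).mono hJ
  have hgJ : ∀ r ∈ uIcc s₀ s, HasDerivWithinAt g (c r • H (g r)) (uIcc s₀ s) r := fun r hr =>
    (hg r (hJ hr)).mono hJ
  have htraj : IsCompact (f '' uIcc s₀ s ∪ g '' uIcc s₀ s) :=
    (isCompact_uIcc.image_of_continuousOn fun r hr => (hfJ r hr).continuousWithinAt).union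
      (isCompact_uIcc.image_of_continuousOn fun r hr => (hgJ r hr).continuousWithinAt)
  obtain ⟨K, hK⟩ := hH.locallyLipschitzOn.exists_lipschitzOnWith_of_compact htraj
  obtain ⟨C, hC⟩ := isCompact_uIcc.exists_bound_of_continuousOn (hc.mono hJ)
  have hv : ∀ r ∈ uIcc s₀ s, LipschitzOnWith (C.toNNReal * K) (fun z => c r • H z)
      (f '' uIcc s₀ s ∪ g '' uIcc s₀ s) := fun r hr =>
    ((lipschitzWith_smul (c r)).weaken
      (NNReal.le_toNNReal_of_coe_le (hC r hr))).comp_lipschitzOnWith hK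
  exact ODE_solution_unique_of_ordConnected ordConnected_uIcc left_mem_uIcc hv
    hfJ (fun r hr => .inl (mem_image_of_mem f hr))
    hgJ (fun r hr => .inr (mem_image_of_mem g hr)) h₀ right_mem_uIcc

end IntervalCalculus

lemma linearMap_apply_single_comm {ι R : Type*} [Finite ι] [DecidableEq ι] [CommSemiring R]
    (f g : (ι → R) →ₗ[R] R) :
    f (fun i => g (Pi.single i 1)) = g (fun i => f (Pi.single i 1)) := by
  cases nonempty_fintype ι
  have hsum : ∀ (h : (ι → R) →ₗ[R] R) u, h u = ∑ i, u i * h (Pi.single i 1) := fun h u => by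
    conv_lhs => rw [pi_eq_sum_univ' u]
    simp only [map_sum, map_smul, smul_eq_mul]
  rw [hsum f, hsum g]
  exact Finset.sum_congr rfl fun i _ => mul_comm _ _

section Hamiltonian

variable {ι : Type*} {β : ℝ × (ι → ℝ) × (ι → ℝ) → ℝ}

/-- The Hamiltonian `ξ₁² - β(x₁, x′, ξ′)²` in normal form near a noncharacteristic hypersurface.
Phase space points are written in the order `(x₁, x′, ξ₁, ξ′)`. -/
def normalForm (β : ℝ × (ι → ℝ) × (ι → ℝ) → ℝ) (z : ℝ × (ι → ℝ) × ℝ × (ι → ℝ)) : ℝ :=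
  z.2.2.1 ^ 2 - β (z.1, z.2.1, z.2.2.2) ^ 2

/-- The section `ξ₁ = β(x₁, x′, ξ′)` of the characteristic set of `normalForm β`; for `β > 0` it
consists of the points where bicharacteristics are outgoing, that is `x₁` increases. -/
def outgoingSection (β : ℝ × (ι → ℝ) × (ι → ℝ) → ℝ) (w : ℝ × (ι → ℝ) × (ι → ℝ)) :
    ℝ × (ι → ℝ) × ℝ × (ι → ℝ) :=
  (w.1, w.2.1, β w, w.2.2)

lemma contDiff_normalForm [Fintype ι] {k : WithTop ℕ∞} (hβ : ContDiff ℝ k β) :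
    ContDiff ℝ k (normalForm β) := by
  unfold normalForm
  fun_prop

lemma fderiv_normalForm_apply [Finite ι] {z : ℝ × (ι → ℝ) × ℝ × (ι → ℝ)}
    (hβ : DifferentiableAt ℝ β (z.1, z.2.1, z.2.2.2)) (v : ℝ × (ι → ℝ) × ℝ × (ι → ℝ)) :
    fderiv ℝ (normalForm β) z v = 2 * z.2.2.1 * v.2.2.1 - 2 * β (z.1, z.2.1, z.2.2.2)
      * fderiv ℝ β (z.1, z.2.1, z.2.2.2) (v.1, v.2.1, v.2.2.2) := by
  cases nonempty_fintype ι
  have hz := hasFDerivAt_id (𝕜 := ℝ) z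
  have hβz := hβ.hasFDerivAt.comp z (hz.fst.prodMk (hz.snd.fst.prodMk hz.snd.snd.snd))
  have hp : HasFDerivAt (normalForm β) _ z := (hz.snd.snd.fst.pow 2).sub (hβz.pow 2)
  rw [hp.fderiv]
  simp

lemma fderiv_normalForm_outgoingSection_apply [Finite ι] {w : ℝ × (ι → ℝ) × (ι → ℝ)}
    (hβ : DifferentiableAt ℝ β w) (v : ℝ × (ι → ℝ) × ℝ × (ι → ℝ)) :
    fderiv ℝ (normalForm β) (outgoingSection β w) v
      = 2 * β w * (v.2.2.1 - fderiv ℝ β w (v.1, v.2.1, v.2.2.2)) := by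
  rw [fderiv_normalForm_apply hβ]
  simp only [outgoingSection]
  ring

variable [DecidableEq ι]

/-- The Hamiltonian vector field of `p`, with position components `∂_{ξ₁}p`, `∂_{ξ′}p` and momentum
components `-∂_{x₁}p`, `-∂_{x′}p`, in the coordinate order `(x₁, x′, ξ₁, ξ′)`. -/
noncomputable def hamiltonField (p : ℝ × (ι → ℝ) × ℝ × (ι → ℝ) → ℝ)
    (z : ℝ × (ι → ℝ) × ℝ × (ι → ℝ)) : ℝ × (ι → ℝ) × ℝ × (ι → ℝ) :=
  (fderiv ℝ p z (0, 0, 1, 0), fun i => fderiv ℝ p z (0, 0, 0, Pi.single i 1),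
    -fderiv ℝ p z (1, 0, 0, 0), fun i => -fderiv ℝ p z (0, Pi.single i 1, 0, 0))

/-- The field `(-∂_{ξ′}β, ∂_{x′}β)` driving the boundary-reduced flow: the Hamiltonian vector field
of `-β(s, ·, ·)`, whose time is the first coordinate of `w = (s, x′, ξ′)`. -/
noncomputable def reducedField (β : ℝ × (ι → ℝ) × (ι → ℝ) → ℝ) (w : ℝ × (ι → ℝ) × (ι → ℝ)) :
    (ι → ℝ) × (ι → ℝ) :=
  (fun i => -fderiv ℝ β w (0, 0, Pi.single i 1), fun i => fderiv ℝ β w (0, Pi.single i 1, 0))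

lemma contDiff_hamiltonField [Fintype ι] {k m : WithTop ℕ∞} {p : ℝ × (ι → ℝ) × ℝ × (ι → ℝ) → ℝ}
    (hp : ContDiff ℝ k p) (hmk : m + 1 ≤ k) : ContDiff ℝ m (hamiltonField p) := by
  have hdp : ∀ v, ContDiff ℝ m fun z => fderiv ℝ p z v := fun v =>
    (hp.fderiv_right hmk).clm_apply contDiff_const
  exact (hdp _).prodMk <| (contDiff_pi.2 fun _ => hdp _).prodMk <|
    (hdp _).neg.prodMk <| contDiff_pi.2 fun _ => (hdp _).neg

lemma fderiv_apply_reducedField [Finite ι] (β : ℝ × (ι → ℝ) × (ι → ℝ) → ℝ)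
    (w : ℝ × (ι → ℝ) × (ι → ℝ)) :
    fderiv ℝ β w (1, reducedField β w) = fderiv ℝ β w (1, 0, 0) := by
  set L := fderiv ℝ β w
  have hcancel : L (0, (fun i => L (0, 0, Pi.single i 1)), 0)
      = L (0, 0, fun i => L (0, Pi.single i 1, 0)) :=
    linearMap_apply_single_comm
      ((L : _ →ₗ[ℝ] ℝ) ∘ₗ .inr ℝ ℝ _ ∘ₗ .inl ℝ (ι → ℝ) (ι → ℝ))
      ((L : _ →ₗ[ℝ] ℝ) ∘ₗ .inr ℝ ℝ _ ∘ₗ .inr ℝ (ι → ℝ) (ι → ℝ))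
  have hsplit : ((1 : ℝ), reducedField β w) = (1, 0, 0)
      - (0, (fun i => L (0, 0, Pi.single i 1)), 0) + (0, 0, fun i => L (0, Pi.single i 1, 0)) := by
    ext <;> simp [reducedField, L]
  rw [hsplit, map_add, map_sub, hcancel, sub_add_cancel]

lemma hamiltonField_normalForm_outgoingSection [Finite ι] {w : ℝ × (ι → ℝ) × (ι → ℝ)}
    (hβ : DifferentiableAt ℝ β w) :
    hamiltonField (normalForm β) (outgoingSection β w)
      = (2 * β w) • (1, (reducedField β w).1, fderiv ℝ β w (1, 0, 0), (reducedField β w).2) := by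
  have hzero : fderiv ℝ β w (0, 0, 0) = 0 := map_zero _
  ext <;> simp [hamiltonField, reducedField, fderiv_normalForm_outgoingSection_apply hβ, hzero]

lemma hasDerivWithinAt_outgoingSection [Finite ι] {I : Set ℝ} {s : ℝ}
    {w : ℝ → (ι → ℝ) × (ι → ℝ)} (hβ : DifferentiableAt ℝ β (s, w s)) (hβ₀ : β (s, w s) ≠ 0)
    (hw : HasDerivWithinAt w (reducedField β (s, w s)) I s) :
    HasDerivWithinAt (fun u => outgoingSection β (u, w u))
      ((2 * β (s, w s))⁻¹ • hamiltonField (normalForm β) (outgoingSection β (s, w s))) I s := by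
  cases nonempty_fintype ι
  have hβw : HasDerivWithinAt (fun u => β (u, w u)) (fderiv ℝ β (s, w s) (1, 0, 0)) I s := by
    rw [← fderiv_apply_reducedField]
    exact hβ.hasFDerivAt.comp_hasDerivWithinAt s ((hasDerivWithinAt_id s I).prodMk hw)
  rw [hamiltonField_normalForm_outgoingSection hβ, inv_smul_smul₀ (mul_ne_zero two_ne_zero hβ₀)]
  exact (hasDerivWithinAt_id s I).prodMk (hw.fst.prodMk (hβw.prodMk hw.snd))

theorem boundary_bicharacteristic_reparametrization_general [Fintype ι] (hβ : ContDiff ℝ 2 β)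
    {I : Set ℝ} (hI : I.OrdConnected) {s₀ : ℝ} (hs₀ : s₀ ∈ I) {w : ℝ → (ι → ℝ) × (ι → ℝ)}
    (hβ₀ : ∀ s ∈ I, β (s, w s) ≠ 0)
    (hw : ∀ s ∈ I, HasDerivWithinAt w (reducedField β (s, w s)) I s)
    {t : ℝ → ℝ} (ht : ∀ s ∈ I, t s = ∫ σ in s₀..s, (2 * β (σ, w σ))⁻¹)
    {z : ℝ → ℝ × (ι → ℝ) × ℝ × (ι → ℝ)}
    (hz : ∀ τ ∈ t '' I, HasDerivWithinAt z (hamiltonField (normalForm β) (z τ)) (t '' I) τ)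
    (hz₀ : z 0 = outgoingSection β (s₀, w s₀)) :
    EqOn (fun s => z (t s)) (fun s => outgoingSection β (s, w s)) I := by
  have hβd : Differentiable ℝ β := hβ.differentiable two_ne_zero
  have hwc : ContinuousOn w I := fun s hs => (hw s hs).continuousWithinAt
  have hc : ContinuousOn (fun s => (2 * β (s, w s))⁻¹) I :=
    (continuousOn_const.mul (hβd.continuous.comp_continuousOn (continuousOn_id.prodMk hwc))).inv₀
      fun s hs => mul_ne_zero two_ne_zero (hβ₀ s hs)
  have htd : ∀ s ∈ I, HasDerivWithinAt t (2 * β (s, w s))⁻¹ I s := fun s hs =>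
    (hasDerivWithinAt_integral_of_ordConnected hI hs₀ hc hs).congr ht (ht s hs)
  have hH : LocallyLipschitz (hamiltonField (normalForm β)) :=
    (contDiff_hamiltonField (m := 1) (contDiff_normalForm hβ) (by norm_num)).locallyLipschitz
  have ht₀ : t s₀ = 0 := by rw [ht s₀ hs₀, intervalIntegral.integral_same]
  refine eqOn_of_hasDerivWithinAt_smul_of_locallyLipschitz hI hs₀ hc hH ?_ ?_ (by rw [ht₀, hz₀])
  · exact fun s hs => (hz _ (mem_image_of_mem t hs)).scomp s (htd s hs) (mapsTo_image t I)
  · exact fun s hs => hasDerivWithinAt_outgoingSection (hβd _) (hβ₀ s hs) (hw s hs)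

end Hamiltonian

/-- Reparametrization of the outgoing bicharacteristic at a noncharacteristic
boundary: with `p(x₁,x′,ξ₁,ξ′) = ξ₁² − b(x₁,x′,ξ′)²` (`b` smooth and positive),
a solution `(y′, η′)` of the reduced Hamiltonian system
`dy′/ds = −∂_{ξ′}b`, `dη′/ds = ∂_{x′}b` with data `(x₀′, ξ₀′)` at `s = 0`, and
the time change `t(s) = ∫₀^s (2b(σ, y′(σ), η′(σ)))⁻¹ dσ`, the bicharacteristic
`(x(t), ξ(t))` of `p` with `x(0) = (0, x₀′)`, `ξ(0) = (b(0,x₀′,ξ₀′), ξ₀′)` satisfies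
`x₁(t(s)) = s`, `x′(t(s)) = y′(s)`, `ξ₁(t(s)) = b(s, y′(s), η′(s))`,
`ξ′(t(s)) = η′(s)`. -/
theorem boundary_bicharacteristic_reparametrization
    (n : ℕ) (hn : 2 ≤ n)
    (b : ℝ → (Fin (n-1) → ℝ) → (Fin (n-1) → ℝ) → ℝ)
    (hb_smooth : ContDiff ℝ (⊤ : ℕ∞)
      (fun w : ℝ × (Fin (n-1) → ℝ) × (Fin (n-1) → ℝ) => b w.1 w.2.1 w.2.2))
    (hb_pos : ∀ a x' ξ', 0 < b a x' ξ')
    (x₀' ξ₀' : Fin (n-1) → ℝ)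
    (I : Set ℝ) (hI : I.OrdConnected) (h0I : (0:ℝ) ∈ I)
    (y' η' : ℝ → Fin (n-1) → ℝ)
    (hy' : ∀ s ∈ I, HasDerivWithinAt y'
      (fun i => - fderiv ℝ
          (fun w : ℝ × (Fin (n-1) → ℝ) × (Fin (n-1) → ℝ) => b w.1 w.2.1 w.2.2)
          (s, y' s, η' s) (0, 0, Pi.single i 1)) I s)
    (hη' : ∀ s ∈ I, HasDerivWithinAt η'
      (fun i => fderiv ℝ
          (fun w : ℝ × (Fin (n-1) → ℝ) × (Fin (n-1) → ℝ) => b w.1 w.2.1 w.2.2)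
          (s, y' s, η' s) (0, Pi.single i 1, 0)) I s)
    (hy'0 : y' 0 = x₀') (hη'0 : η' 0 = ξ₀')
    (t : ℝ → ℝ)
    (ht : ∀ s, t s = ∫ σ in (0:ℝ)..s, (2 * b σ (y' σ) (η' σ))⁻¹)
    (p : ℝ × (Fin (n-1) → ℝ) × ℝ × (Fin (n-1) → ℝ) → ℝ)
    (hp : ∀ x₁ x' ξ₁ ξ', p (x₁, x', ξ₁, ξ') = ξ₁^2 - (b x₁ x' ξ')^2)
    (X₁ : ℝ → ℝ) (X' : ℝ → Fin (n-1) → ℝ) (Ξ₁ : ℝ → ℝ) (Ξ' : ℝ → Fin (n-1) → ℝ)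
    (hX₁ : ∀ τ ∈ t '' I, HasDerivWithinAt X₁
      (fderiv ℝ p (X₁ τ, X' τ, Ξ₁ τ, Ξ' τ) (0, 0, 1, 0)) (t '' I) τ)
    (hX' : ∀ τ ∈ t '' I, HasDerivWithinAt X'
      (fun i => fderiv ℝ p (X₁ τ, X' τ, Ξ₁ τ, Ξ' τ) (0, 0, 0, Pi.single i 1)) (t '' I) τ)
    (hΞ₁ : ∀ τ ∈ t '' I, HasDerivWithinAt Ξ₁
      (- fderiv ℝ p (X₁ τ, X' τ, Ξ₁ τ, Ξ' τ) (1, 0, 0, 0)) (t '' I) τ)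
    (hΞ' : ∀ τ ∈ t '' I, HasDerivWithinAt Ξ'
      (fun i => - fderiv ℝ p (X₁ τ, X' τ, Ξ₁ τ, Ξ' τ) (0, Pi.single i 1, 0, 0)) (t '' I) τ)
    (hX₁0 : X₁ 0 = 0) (hX'0 : X' 0 = x₀')
    (hΞ₁0 : Ξ₁ 0 = b 0 x₀' ξ₀') (hΞ'0 : Ξ' 0 = ξ₀') :
    ∀ s ∈ I, X₁ (t s) = s ∧ X' (t s) = y' s ∧
      Ξ₁ (t s) = b s (y' s) (η' s) ∧ Ξ' (t s) = η' s := by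
  obtain rfl : p = normalForm fun w => b w.1 w.2.1 w.2.2 := funext fun _ => hp _ _ _ _
  intro s hs
  simpa only [outgoingSection, Prod.mk.injEq] using
    boundary_bicharacteristic_reparametrization_general
      (w := fun s => (y' s, η' s)) (z := fun τ => (X₁ τ, X' τ, Ξ₁ τ, Ξ' τ))
      (hb_smooth.of_le (WithTop.coe_le_coe.2 le_top)) hI h0I (fun _ _ => (hb_pos _ _ _).ne')
      (fun s hs => (hy' s hs).prodMk (hη' s hs)) (fun s _ => ht s)
      (fun τ hτ => (hX₁ τ hτ).prodMk <| (hX' τ hτ).prodMk <| (hΞ₁ τ hτ).prodMk (hΞ' τ hτ))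
      (by rw [hX₁0, hX'0, hΞ₁0, hΞ'0, hy'0, hη'0, outgoingSection]) hs
end

section
/- For h > 0 and k ∈ ℕ, define v : ℝ → ℝ by v(x) = He_k(√(2/h)·x)·exp(−x²/(2h)). Then for every x ∈ ℝ: −h² v″(x) + x² v(x) = h(2k+1) v(x). -/
/-!
Conjugating `-h² d²/dx² + x²` by the Gaussian `exp(-x²/(2h))` cancels the potential and leaves
`-h² d²/dx² + 2hx d/dx + h`. In the variable `z = √(2/h) x` this is
`2h (z d/dz - d²/dz²) + h`, and `He_k` is an eigenfunction of `z d/dz - d²/dz²` with eigenvalue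
`k`, because `He_{k+1}' = (k+1) He_k`.
-/

/-- The semiclassical harmonic-oscillator eigenfunction built from the `k`-th
probabilists' Hermite polynomial: `v(x) = He_k(√(2/h)·x)·exp(−x²/(2h))`. -/
noncomputable def hermiteEigenfunction (h : ℝ) (k : ℕ) (x : ℝ) : ℝ :=
  (Polynomial.aeval (Real.sqrt (2 / h) * x) (Polynomial.hermite k)) *
    Real.exp (-x ^ 2 / (2 * h))

section HermiteEquation

open Polynomial

theorem derivative_hermite_succ (k : ℕ) :
    derivative (hermite (k + 1)) = (k + 1 : ℤ[X]) * hermite k := by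
  induction k with
  | zero => simp
  | succ k ih =>
    have second_derivative : derivative (derivative (hermite (k + 1)))
        = (k + 1 : ℤ[X]) * derivative (hermite k) := by
      rw [ih]
      simp [derivative_mul]
    calc derivative (hermite (k + 2))
        = hermite (k + 1) + X * derivative (hermite (k + 1))
            - derivative (derivative (hermite (k + 1))) := by
          simp only [hermite_succ (k + 1), derivative_sub, derivative_mul, derivative_X, one_mul]
      _ = hermite (k + 1) + (k + 1 : ℤ[X]) * (X * hermite k - derivative (hermite k)) := by
          rw [second_derivative, ih]; ring
      _ = ((k + 1 : ℕ) + 1 : ℤ[X]) * hermite (k + 1) := by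
          rw [← hermite_succ]; push_cast; ring

theorem X_mul_derivative_hermite_sub_derivative_derivative (k : ℕ) :
    X * derivative (hermite k) - derivative (derivative (hermite k)) = (k : ℤ[X]) * hermite k := by
  have appell := derivative_hermite_succ k
  simp only [hermite_succ, derivative_sub, derivative_mul, derivative_X, one_mul] at appell
  linear_combination appell

theorem hasDerivAt_aeval_const_mul {R 𝕜 : Type*} [CommSemiring R] [NontriviallyNormedField 𝕜]
    [Algebra R 𝕜] (p : R[X]) (c x : 𝕜) :
    HasDerivAt (fun y => aeval (c * y) p) (c * aeval (c * x) (derivative p)) x := by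
  have inner_deriv : HasDerivAt (fun y => c * y) c x := by
    simpa only [mul_one] using (hasDerivAt_id' x).const_mul c
  simpa only [mul_comm, Function.comp_def] using (p.hasDerivAt_aeval (c * x)).comp x inner_deriv

end HermiteEquation

section Conjugation

open Filter Topology

theorem hasDerivAt_mul_exp {u φ : ℝ → ℝ} {u' φ' x : ℝ}
    (hu : HasDerivAt u u' x) (hφ : HasDerivAt φ φ' x) :
    HasDerivAt (fun y => u y * Real.exp (φ y)) ((u' + φ' * u x) * Real.exp (φ x)) x :=
  (hu.fun_mul hφ.exp).congr_deriv (by ring)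

theorem deriv_deriv_mul_exp {u φ u' φ' : ℝ → ℝ} {u'' φ'' x : ℝ}
    (hu : ∀ᶠ y in 𝓝 x, HasDerivAt u (u' y) y) (hu' : HasDerivAt u' u'' x)
    (hφ : ∀ᶠ y in 𝓝 x, HasDerivAt φ (φ' y) y) (hφ' : HasDerivAt φ' φ'' x) :
    deriv (deriv fun y => u y * Real.exp (φ y)) x
      = (u'' + 2 * φ' x * u' x + (φ'' + φ' x ^ 2) * u x) * Real.exp (φ x) := by
  have first_deriv : deriv (fun y => u y * Real.exp (φ y))
      =ᶠ[𝓝 x] fun y => (u' y + φ' y * u y) * Real.exp (φ y) := by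
    filter_upwards [hu, hφ] with y huy hφy using (hasDerivAt_mul_exp huy hφy).deriv
  have second_deriv :=
    hasDerivAt_mul_exp (hu'.fun_add (hφ'.fun_mul hu.self_of_nhds)) hφ.self_of_nhds
  rw [first_deriv.deriv_eq, second_deriv.deriv]
  ring

theorem harmonicOscillator_mul_gaussian {h : ℝ} (hh : h ≠ 0) {u u' : ℝ → ℝ} {u'' x : ℝ}
    (hu : ∀ᶠ y in 𝓝 x, HasDerivAt u (u' y) y) (hu' : HasDerivAt u' u'' x) :
    -h ^ 2 * deriv (deriv fun y => u y * Real.exp (-y ^ 2 / (2 * h))) x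
        + x ^ 2 * (u x * Real.exp (-x ^ 2 / (2 * h)))
      = (-h ^ 2 * u'' + 2 * h * x * u' x + h * u x) * Real.exp (-x ^ 2 / (2 * h)) := by
  have exponent_deriv (y : ℝ) : HasDerivAt (fun y => -y ^ 2 / (2 * h)) (-y / h) y :=
    ((hasDerivAt_pow 2 y).fun_neg.div_const (2 * h)).congr_deriv (by push_cast; field_simp)
  have exponent_second_deriv : HasDerivAt (fun y => -y / h) (-1 / h) x :=
    (hasDerivAt_id' x).fun_neg.div_const h
  rw [deriv_deriv_mul_exp hu hu' (.of_forall exponent_deriv) exponent_second_deriv]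
  field_simp
  ring

end Conjugation

/-- The eigenfunction equation for the semiclassical harmonic oscillator:
`−h² v″(x) + x² v(x) = h(2k+1) v(x)` for `v(x) = He_k(√(2/h)·x)·exp(−x²/(2h))`. -/
theorem hermite_harmonic_oscillator_eigenfunction (h : ℝ) (hh : 0 < h) (k : ℕ) :
    ∀ x : ℝ,
      - h ^ 2 * deriv (deriv (hermiteEigenfunction h k)) x
          + x ^ 2 * hermiteEigenfunction h k x
        = h * (2 * (k : ℝ) + 1) * hermiteEigenfunction h k x := by
  intro x
  set c := Real.sqrt (2 / h) with hc
  have scale : h * c ^ 2 = 2 := by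
    rw [hc, Real.sq_sqrt (by positivity), mul_div_cancel₀ _ hh.ne']
  set p := Polynomial.hermite k with hp
  have conjugated := harmonicOscillator_mul_gaussian hh.ne'
    (.of_forall fun y => hasDerivAt_aeval_const_mul p c y)
    ((hasDerivAt_aeval_const_mul p.derivative c x).const_mul c)
  have hermite_equation := congrArg (Polynomial.aeval (c * x))
    (X_mul_derivative_hermite_sub_derivative_derivative k)
  simp only [map_sub, map_mul, Polynomial.aeval_X, map_natCast, ← hp] at hermite_equation
  refine conjugated.trans ?_
  rw [hermiteEigenfunction, ← hc, ← hp]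
  linear_combination Real.exp (-x ^ 2 / (2 * h)) * (2 * h * hermite_equation
    - h * Polynomial.aeval (c * x) p.derivative.derivative * scale)
end

section
/- Let m ∈ ℕ, m ≥ 1, and suppose (c_j)_{j∈ℕ} is a sequence of functions c_j : (0,1] → ℂ for which there exist constants C_j with |c_j(h)| ≤ C_j h^{(j+1)/m} for all h ∈ (0,1]. Then there exists a function z̃ : (0,1] → ℂ such that for every N ∈ ℕ there is a constant C_N′ with |z̃(h) − Σ_{j=0}^{mN+m} c_j(h)| ≤ C_N′ h^N for all h ∈ (0,1]. -/
/-!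
No regularity in `h` is asked of the sum, so the cutoff `χ(λ_j h)` can be taken sharp: the `j`-th
term is kept while `λ_j h ≤ 1`. Truncating a term changes it only where `h` is bounded below, which
costs `O(h^s)` for every `s`. Where a term of order `h^p` with `p ≥ s + 1` is kept, the spare factor
`h` is at most `1 / λ_j`, so `λ_j` can be chosen to make the term at most `2^{-j} h^s`; all but
finitely many terms are of this kind, and the geometric series bounds them together.
-/

open Asymptotics Filter Set

section Resummation

variable {E : Type*} [SeminormedAddCommGroup E] {f : ℝ → E} {c : ℕ → ℝ → E} {lam : ℕ → ℝ}
  {p s h L ε : ℝ}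

lemma isBigO_principal_Ioc_rpow_iff :
    (f =O[𝓟 (Ioc 0 1)] fun h => h ^ p) ↔ ∃ C : ℝ, ∀ h ∈ Ioc (0 : ℝ) 1, ‖f h‖ ≤ C * h ^ p := by
  rw [isBigO_principal]
  refine exists_congr fun C => forall₂_congr fun h hh => ?_
  rw [Real.norm_of_nonneg (Real.rpow_nonneg hh.1.le p)]

lemma isBigO_rpow_rpow_of_le (hsp : s ≤ p) :
    (fun h : ℝ => h ^ p) =O[𝓟 (Ioc 0 1)] fun h => h ^ s :=
  isBigO_principal_Ioc_rpow_iff.2 ⟨1, fun h hh => by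
    rw [one_mul, Real.norm_of_nonneg (Real.rpow_nonneg hh.1.le p)]
    exact Real.rpow_le_rpow_of_exponent_ge hh.1 hh.2 hsp⟩

lemma rpow_le_abs_rpow_mul_rpow (hh : h ∈ Ioc (0 : ℝ) 1) (hL : 1 ≤ L * h) (p s : ℝ) :
    h ^ p ≤ L ^ |s - p| * h ^ s := by
  have hinv : h⁻¹ ≤ L := by rwa [inv_le_iff_one_le_mul₀ hh.1]
  calc h ^ p = h⁻¹ ^ (s - p) * h ^ s := by
        rw [Real.inv_rpow hh.1.le, ← Real.rpow_neg hh.1.le, ← Real.rpow_add hh.1, neg_sub,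
          sub_add_cancel]
    _ ≤ h⁻¹ ^ |s - p| * h ^ s := by
        gcongr
        · exact Real.rpow_nonneg hh.1.le s
        · exact (one_le_inv₀ hh.1).2 hh.2
        · exact le_abs_self _
    _ ≤ L ^ |s - p| * h ^ s := by
        have := hh.1
        gcongr

/-- The truncation `χ(L h) f(h)` of `f`, with the indicator of `(-∞, 1]` in place of a smooth
cutoff `χ`. -/
noncomputable def sharpCutoff (L : ℝ) (f : ℝ → E) (h : ℝ) : E :=
  if L * h ≤ 1 then f h else 0

lemma isBigO_sharpCutoff_sub (hf : f =O[𝓟 (Ioc 0 1)] fun h => h ^ p) (L s : ℝ) :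
    (fun h => sharpCutoff L f h - f h) =O[𝓟 (Ioc 0 1)] fun h => h ^ s := by
  obtain ⟨C, hC, hfC⟩ := hf.exists_nonneg
  rw [isBigOWith_principal] at hfC
  refine isBigO_principal_Ioc_rpow_iff.2 ⟨C * |L| ^ |s - p|, fun h hh => ?_⟩
  by_cases hcut : L * h ≤ 1
  · rw [sharpCutoff, if_pos hcut, sub_self, norm_zero]
    have := hh.1
    positivity
  · have hLh : 1 ≤ |L| * h :=
      (not_le.1 hcut).le.trans (mul_le_mul_of_nonneg_right (le_abs_self L) hh.1.le)
    rw [sharpCutoff, if_neg hcut, zero_sub, norm_neg, mul_assoc]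
    calc ‖f h‖ ≤ C * ‖h ^ p‖ := hfC h hh
      _ = C * h ^ p := by rw [Real.norm_of_nonneg (Real.rpow_nonneg hh.1.le p)]
      _ ≤ C * (|L| ^ |s - p| * h ^ s) := by
          gcongr
          exact rpow_le_abs_rpow_mul_rpow hh hLh p s

lemma norm_sharpCutoff_le {C : ℝ} (hh : h ∈ Ioc (0 : ℝ) 1) (hf : ‖f h‖ ≤ C * h ^ p)
    (hC : 0 ≤ C) (hε : 0 ≤ ε) (hCL : C ≤ ε * L) (hsp : s + 1 ≤ p) :
    ‖sharpCutoff L f h‖ ≤ ε * h ^ s := by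
  have hhs : 0 ≤ h ^ s := Real.rpow_nonneg hh.1.le s
  by_cases hcut : L * h ≤ 1
  · rw [sharpCutoff, if_pos hcut]
    calc ‖f h‖ ≤ C * h ^ p := hf
      _ ≤ C * h ^ (s + 1) :=
          mul_le_mul_of_nonneg_left (Real.rpow_le_rpow_of_exponent_ge hh.1 hh.2 hsp) hC
      _ = C * h * h ^ s := by rw [Real.rpow_add_one hh.1.ne']; ring
      _ ≤ ε * L * h * h ^ s := by
          have := hh.1
          gcongr
      _ = ε * (L * h) * h ^ s := by ring
      _ ≤ ε * 1 * h ^ s := by gcongr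
      _ = ε * h ^ s := by rw [mul_one]
  · rw [sharpCutoff, if_neg hcut, norm_zero]
    positivity

lemma exists_ge_forall_norm_sharpCutoff_le (hf : f =O[𝓟 (Ioc 0 1)] fun h => h ^ p)
    (hε : 0 < ε) (L₀ : ℝ) :
    ∃ L ≥ L₀, ∀ s, s + 1 ≤ p → ∀ h ∈ Ioc (0 : ℝ) 1, ‖sharpCutoff L f h‖ ≤ ε * h ^ s := by
  obtain ⟨C, hC⟩ := isBigO_principal_Ioc_rpow_iff.1 hf
  have hCL : |C| ≤ ε * max L₀ (|C| / ε) := (div_le_iff₀' hε).1 (le_max_right _ _)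
  refine ⟨max L₀ (|C| / ε), le_max_left _ _, fun s hsp h hh => ?_⟩
  have hfC : ‖f h‖ ≤ |C| * h ^ p :=
    (hC h hh).trans (mul_le_mul_of_nonneg_right (le_abs_self C) (Real.rpow_nonneg hh.1.le p))
  exact norm_sharpCutoff_le hh hfC (abs_nonneg C) hε.le hCL hsp

/-- The Borel sum `∑ χ(λ_j h) c_j(h)` with sharp cutoffs at the scales `λ_j = lam j`. If `lam`
tends to infinity, only finitely many terms are nonzero at each `h > 0`, so no
convergence is involved and `∑ᶠ` is their sum (otherwise it is `0` by convention). -/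
noncomputable def borelSum (lam : ℕ → ℝ) (c : ℕ → ℝ → E) (h : ℝ) : E :=
  ∑ᶠ j, sharpCutoff (lam j) (c j) h

lemma eventually_borelSum_eq_sum (hlam : Tendsto lam atTop atTop) (hh : 0 < h) :
    ∀ᶠ K in atTop, borelSum lam c h = ∑ j ∈ Finset.range K, sharpCutoff (lam j) (c j) h := by
  obtain ⟨K₀, hK₀⟩ := eventually_atTop.1 (hlam.eventually_gt_atTop (1 / h))
  filter_upwards [eventually_ge_atTop K₀] with K hK
  refine finsum_eq_sum_of_support_subset _ fun j hj => ?_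
  have hkept : lam j * h ≤ 1 := (ite_ne_right_iff.1 hj).1
  have hjK₀ : ¬ K₀ ≤ j := fun hle => (hK₀ j hle).not_ge ((le_div_iff₀ hh).2 hkept)
  exact Finset.mem_coe.2 (Finset.mem_range.2 ((not_le.1 hjK₀).trans_le hK))

lemma isBigO_borelSum_sub_sum {M : ℕ} {a : ℕ → ℝ} (ha : Summable a) (ha0 : ∀ j, 0 ≤ a j)
    (hlam : Tendsto lam atTop atTop)
    (hM : ∀ j ≥ M, ∀ h ∈ Ioc (0 : ℝ) 1, ‖sharpCutoff (lam j) (c j) h‖ ≤ a j * h ^ s) :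
    (fun h => borelSum lam c h - ∑ j ∈ Finset.range M, sharpCutoff (lam j) (c j) h)
      =O[𝓟 (Ioc 0 1)] fun h => h ^ s := by
  refine isBigO_principal_Ioc_rpow_iff.2 ⟨∑' j, a j, fun h hh => ?_⟩
  obtain ⟨K, hK, hMK⟩ :=
    ((eventually_borelSum_eq_sum (c := c) hlam hh.1).and (eventually_ge_atTop M)).exists
  rw [hK, ← Finset.sum_Ico_eq_sub _ hMK]
  calc ‖∑ j ∈ Finset.Ico M K, sharpCutoff (lam j) (c j) h‖
      ≤ ∑ j ∈ Finset.Ico M K, a j * h ^ s :=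
        norm_sum_le_of_le _ fun j hj => hM j (Finset.mem_Ico.1 hj).1 h hh
    _ = (∑ j ∈ Finset.Ico M K, a j) * h ^ s := (Finset.sum_mul ..).symm
    _ ≤ (∑' j, a j) * h ^ s :=
        mul_le_mul_of_nonneg_right (ha.sum_le_tsum _ fun j _ => ha0 j)
          (Real.rpow_nonneg hh.1.le s)

theorem borel_resummation_general {p : ℕ → ℝ} (hp : Tendsto p atTop atTop)
    (hc : ∀ j, c j =O[𝓟 (Ioc 0 1)] fun h => h ^ p j) :
    ∃ z : ℝ → E, ∀ (s : ℝ) (n : ℕ), (∀ j ≥ n, s ≤ p j) →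
      (fun h => z h - ∑ j ∈ Finset.range n, c j h) =O[𝓟 (Ioc 0 1)] fun h => h ^ s := by
  choose lam hlam_ge hlam using fun j : ℕ =>
    exists_ge_forall_norm_sharpCutoff_le (hc j) (pow_pos one_half_pos j) (j : ℝ)
  have hlam_top : Tendsto lam atTop atTop :=
    tendsto_atTop_mono hlam_ge tendsto_natCast_atTop_atTop
  refine ⟨borelSum lam c, fun s n hn => ?_⟩
  obtain ⟨M, hM, hnM⟩ := ((eventually_forall_ge_atTop.2 (hp.eventually_ge_atTop (s + 1))).and
    (eventually_ge_atTop n)).exists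
  have htail := isBigO_borelSum_sub_sum summable_geometric_two (fun j => by positivity) hlam_top
    fun j hj => hlam j s (hM j hj)
  have htruncation : (fun h => ∑ j ∈ Finset.range M, (sharpCutoff (lam j) (c j) h - c j h))
      =O[𝓟 (Ioc 0 1)] fun h => h ^ s :=
    IsBigO.fun_sum fun j _ => isBigO_sharpCutoff_sub (hc j) (lam j) s
  have hmiddle : (fun h => ∑ j ∈ Finset.Ico n M, c j h) =O[𝓟 (Ioc 0 1)] fun h => h ^ s :=
    IsBigO.fun_sum fun j hj =>
      (hc j).trans (isBigO_rpow_rpow_of_le (hn j (Finset.mem_Ico.1 hj).1))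
  refine ((htail.add htruncation).add hmiddle).congr_left fun h => ?_
  rw [Finset.sum_sub_distrib, Finset.sum_Ico_eq_sub _ hnM]
  abel

end Resummation

lemma tendsto_add_one_div_atTop {m : ℕ} (hm : 1 ≤ m) :
    Tendsto (fun j : ℕ => ((j : ℝ) + 1) / m) atTop atTop :=
  (tendsto_natCast_atTop_atTop.atTop_add tendsto_const_nhds).atTop_div_const
    (Nat.cast_pos.2 hm)

lemma natCast_le_add_one_div {m N j : ℕ} (hm : 1 ≤ m) (hj : m * N ≤ j + 1) :
    (N : ℝ) ≤ ((j : ℝ) + 1) / m := by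
  rw [le_div_iff₀' (Nat.cast_pos.2 hm)]
  exact_mod_cast hj

/-- Borel resummation: if `c_j(h) = O(h^{(j+1)/m})` on `(0,1]`, then there is a
function `z̃(h)` admitting `Σ_j c_j(h)` as an asymptotic expansion to all orders:
for every `N` there is `C_N′` with `|z̃(h) − Σ_{j=0}^{mN+m} c_j(h)| ≤ C_N′ h^N`. -/
theorem borel_resummation (m : ℕ) (hm : 1 ≤ m)
    (c : ℕ → ℝ → ℂ)
    (hc : ∀ j : ℕ, ∃ C : ℝ, ∀ h ∈ Set.Ioc (0:ℝ) 1,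
      ‖c j h‖ ≤ C * h ^ (((j : ℝ) + 1) / (m : ℝ))) :
    ∃ z : ℝ → ℂ, ∀ N : ℕ, ∃ C' : ℝ, ∀ h ∈ Set.Ioc (0:ℝ) 1,
      ‖z h - ∑ j ∈ Finset.range (m * N + m + 1), c j h‖ ≤ C' * h ^ (N : ℝ) := by
  simp only [← isBigO_principal_Ioc_rpow_iff] at hc ⊢
  obtain ⟨z, hz⟩ := borel_resummation_general (tendsto_add_one_div_atTop hm) hc
  exact ⟨z, fun N => hz N _ fun j hj => natCast_le_add_one_div hm (by omega)⟩
end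

section
/- Let S be a complex 2n×2n symplectic matrix and let μ, ν ∈ ℂ with μν ≠ 1. If u, v ∈ ℂ^{2n} are generalized eigenvectors, (S − μI)^{2n} u = 0 and (S − νI)^{2n} v = 0, then uᵀ J v = 0; that is, the generalized eigenspaces of S for eigenvalues μ and ν with μν ≠ 1 are orthogonal with respect to the symplectic bilinear form ω(u, v) = uᵀ J v. -/
/-!
Let `ω` be a bilinear pairing with `ω (f x) (g y) = ω x y`, and put `x' = f x - μ x`,
`y' = g y - ν y`. Expanding `ω x y = ω (x' + μ x) (y' + ν y)` gives
`(1 - μν) ω x y = ω x' y' + ν ω x' y + μ ω x y'`.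
Passing from `x` to `x'` or from `y` to `y'` lowers the order of a generalized eigenvector, so the
right-hand side vanishes by induction on the two orders, and `1 - μν` can be cancelled.
-/

open Matrix

section Pairing

variable {R M N P : Type*} [CommRing R] [AddCommGroup M] [AddCommGroup N] [AddCommGroup P]
  [Module R M] [Module R N] [Module R P] {B : M →ₗ[R] N →ₗ[R] P}
  {f : Module.End R M} {g : Module.End R N}

theorem one_sub_mul_smul_apply_of_compl₁₂_eq_self (hB : B.compl₁₂ f g = B) (μ ν : R)
    (x : M) (y : N) :
    (1 - μ * ν) • B x y =
      B ((f - μ • 1) x) ((g - ν • 1) y) + ν • B ((f - μ • 1) x) y + μ • B x ((g - ν • 1) y) := by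
  have hfg : B (f x) (g y) = B x y := LinearMap.congr_fun₂ hB x y
  simp only [LinearMap.sub_apply, LinearMap.smul_apply, Module.End.one_apply, map_sub, map_smul,
    hfg]
  module

theorem apply_eq_zero_of_mem_maxGenEigenspace (hB : B.compl₁₂ f g = B) {μ ν : R}
    (hμν : IsSMulRegular P (1 - μ * ν)) {x : M} {y : N}
    (hx : x ∈ f.maxGenEigenspace μ) (hy : y ∈ g.maxGenEigenspace ν) : B x y = 0 := by
  rw [Module.End.mem_maxGenEigenspace] at hx hy
  obtain ⟨a, hx⟩ := hx
  obtain ⟨b, hy⟩ := hy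
  induction a generalizing x y b with
  | zero =>
    obtain rfl : x = 0 := hx
    exact B.map_zero₂ y
  | succ a iha =>
    induction b generalizing y with
    | zero =>
      obtain rfl : y = 0 := hy
      exact (B x).map_zero
    | succ b ihb =>
      have hx' : ((f - μ • 1) ^ a) ((f - μ • 1) x) = 0 := by
        rwa [← Module.End.mul_apply, ← pow_succ]
      have hy' : ((g - ν • 1) ^ b) ((g - ν • 1) y) = 0 := by
        rwa [← Module.End.mul_apply, ← pow_succ]
      apply hμν.right_eq_zero_of_smul
      rw [one_sub_mul_smul_apply_of_compl₁₂_eq_self hB, iha hx' b hy', iha hx' (b + 1) hy,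
        ihb hy', smul_zero, smul_zero, add_zero, add_zero]

end Pairing

section MatrixPairing

variable {R m n : Type*} [CommRing R] [Fintype m] [DecidableEq m] [Fintype n] [DecidableEq n]

theorem mem_maxGenEigenspace_toLin'_iff {S : Matrix m m R} {μ : R} {u : m → R} :
    u ∈ Module.End.maxGenEigenspace (toLin' S) μ ↔ ∃ k : ℕ, ((S - μ • 1) ^ k) *ᵥ u = 0 := by
  have hpow (k : ℕ) : (toLin' S - μ • 1) ^ k = toLin' ((S - μ • 1) ^ k) := by
    rw [toLin'_pow, map_sub, map_smul, toLin'_one, Module.End.one_eq_id]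
  simp only [Module.End.mem_maxGenEigenspace, hpow, toLin'_apply]

theorem symplectic_generalized_eigenspaces_orthogonal_general
    {S : Matrix m m R} {T : Matrix n n R} {J : Matrix m n R} (hJ : Sᵀ * J * T = J)
    {μ ν : R} (hμν : IsSMulRegular R (1 - μ * ν)) {a b : ℕ} {u : m → R} {v : n → R}
    (hu : ((S - μ • 1) ^ a) *ᵥ u = 0) (hv : ((T - ν • 1) ^ b) *ᵥ v = 0) :
    u ⬝ᵥ J *ᵥ v = 0 := by
  have hB : (toLinearMap₂' R J).compl₁₂ (toLin' S) (toLin' T) = toLinearMap₂' R J := by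
    rw [toLinearMap₂'_comp, hJ]
  rw [← toLinearMap₂'_apply']
  exact apply_eq_zero_of_mem_maxGenEigenspace hB hμν
    (mem_maxGenEigenspace_toLin'_iff.mpr ⟨a, hu⟩) (mem_maxGenEigenspace_toLin'_iff.mpr ⟨b, hv⟩)

end MatrixPairing

/-- Generalized eigenspaces of a complex symplectic matrix `S` for eigenvalues
`μ, ν` with `μν ≠ 1` are orthogonal for the symplectic form `ω(u,v) = uᵀ J v`. -/
theorem symplectic_generalized_eigenspaces_orthogonal
    (n : ℕ) (S : Matrix (Fin n ⊕ Fin n) (Fin n ⊕ Fin n) ℂ)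
    (hS : Sᵀ * (Matrix.fromBlocks 0 (-1) 1 0 : Matrix (Fin n ⊕ Fin n) (Fin n ⊕ Fin n) ℂ) * S
        = Matrix.fromBlocks 0 (-1) 1 0)
    (μ ν : ℂ) (hμν : μ * ν ≠ 1)
    (u v : Fin n ⊕ Fin n → ℂ)
    (hu : ((S - μ • 1) ^ (2 * n)).mulVec u = 0)
    (hv : ((S - ν • 1) ^ (2 * n)).mulVec v = 0) :
    u ⬝ᵥ (Matrix.fromBlocks 0 (-1) 1 0 : Matrix (Fin n ⊕ Fin n) (Fin n ⊕ Fin n) ℂ).mulVec v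
      = 0 := by
  have hreg : IsSMulRegular ℂ (1 - μ * ν) := .of_ne_zero (sub_ne_zero.mpr hμν.symm)
  exact symplectic_generalized_eigenspaces_orthogonal_general hS hreg hu hv
end

section
/- Define Ṽ : ℝ² → ℝ by Ṽ(y, z) = cosh⁻²(y)·(2z⁴ − z² + 1)⁻² − 1. Then (0, 0), (0, 1/2) and (0, −1/2) are critical points of Ṽ (the gradient of Ṽ vanishes there); the Hessian of Ṽ at (0, 0) is the diagonal matrix diag(−2, 4), which is nondegenerate with signature (−, +); and the Hessian of Ṽ at (0, ±1/2) is the diagonal matrix diag(−128/49, −4096/343), which is nondegenerate and negative definite (signature (−, −)). -/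
/-! A function `f(y) g(z) - c` has, at a point where `f' = g' = 0`, vanishing mixed derivatives
`f' g'`, so its Hessian there is `diag(f'' g, f g'')`. Here `f = u⁻²` with `u = cosh`, and `g = q⁻²`
with `q = 2z⁴ - z² + 1 > 0`. At a critical point of `u` the `u'²` term of `(u⁻²)''` drops out,
leaving `-2 u''/u³`; and `q' = 8z³ - 2z = 2z(2z - 1)(2z + 1)` vanishes at `0, ±1/2`. -/

/-- The effective potential `Ṽ(y,z) = cosh⁻²(y)·(2z⁴ − z² + 1)⁻² − 1` of the
geodesic flow of `ds² = cosh²y (2z⁴−z²+1)² dx² + dy² + dz²`. -/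
noncomputable def effPot (y z : ℝ) : ℝ :=
  ((Real.cosh y) ^ 2)⁻¹ * ((2 * z ^ 4 - z ^ 2 + 1) ^ 2)⁻¹ - 1

open scoped Filter Topology

section

variable {𝕜 : Type*} [NontriviallyNormedField 𝕜]

/-- `(y₀, z₀)` is a critical point of the function `V` of two variables, at which the Hessian
of `V` is `diag(a, b)`. Everything is expressed by iterated partial derivatives. The outer
derivatives are asserted to exist; an inner `deriv` has the value `0` where `V` fails to have the
partial derivative in question. -/
structure IsCritPtWithDiagHessian (V : 𝕜 → 𝕜 → 𝕜) (y₀ z₀ a b : 𝕜) : Prop where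
  hasDerivAt_left : HasDerivAt (fun y => V y z₀) 0 y₀
  hasDerivAt_right : HasDerivAt (fun z => V y₀ z) 0 z₀
  hasDerivAt_left_left : HasDerivAt (fun y => deriv (fun y' => V y' z₀) y) a y₀
  hasDerivAt_right_right : HasDerivAt (fun z => deriv (fun z' => V y₀ z') z) b z₀
  hasDerivAt_right_left : HasDerivAt (fun z => deriv (fun y => V y z) y₀) 0 z₀
  hasDerivAt_left_right : HasDerivAt (fun y => deriv (fun z => V y z) z₀) 0 y₀

namespace IsCritPtWithDiagHessian

variable {V : 𝕜 → 𝕜 → 𝕜} {y₀ z₀ a b : 𝕜}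

theorem gradient_eq_zero (h : IsCritPtWithDiagHessian V y₀ z₀ a b) :
    deriv (fun y => V y z₀) y₀ = 0 ∧ deriv (fun z => V y₀ z) z₀ = 0 :=
  ⟨h.hasDerivAt_left.deriv, h.hasDerivAt_right.deriv⟩

theorem hessian_eq_diag (h : IsCritPtWithDiagHessian V y₀ z₀ a b) :
    deriv (fun y => deriv (fun y' => V y' z₀) y) y₀ = a ∧
    deriv (fun z => deriv (fun z' => V y₀ z') z) z₀ = b ∧
    deriv (fun z => deriv (fun y => V y z) y₀) z₀ = 0 ∧
    deriv (fun y => deriv (fun z => V y z) z₀) y₀ = 0 :=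
  ⟨h.hasDerivAt_left_left.deriv, h.hasDerivAt_right_right.deriv,
    h.hasDerivAt_right_left.deriv, h.hasDerivAt_left_right.deriv⟩

theorem mul_sub_const {f g : 𝕜 → 𝕜}
    (hf : HasDerivAt f 0 y₀) (hf' : HasDerivAt (deriv f) a y₀)
    (hg : HasDerivAt g 0 z₀) (hg' : HasDerivAt (deriv g) b z₀) (c : 𝕜) :
    IsCritPtWithDiagHessian (fun y z => f y * g z - c) y₀ z₀ (a * g z₀) (f y₀ * b) where
  hasDerivAt_left := by simpa using (hf.mul_const (g z₀)).sub_const c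
  hasDerivAt_right := by simpa using (hg.const_mul (f y₀)).sub_const c
  hasDerivAt_left_left := by
    simpa only [deriv_sub_const, deriv_mul_const_field] using hf'.mul_const (g z₀)
  hasDerivAt_right_right := by
    simpa only [deriv_sub_const, deriv_const_mul_field] using hg'.const_mul (f y₀)
  hasDerivAt_right_left := by
    simpa only [deriv_sub_const, deriv_mul_const_field, hf.deriv, zero_mul]
      using hasDerivAt_const z₀ (0 : 𝕜)
  hasDerivAt_left_right := by
    simpa only [deriv_sub_const, deriv_const_mul_field, hg.deriv, mul_zero]
      using hasDerivAt_const y₀ (0 : 𝕜)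

end IsCritPtWithDiagHessian

section InvSq

variable {u : 𝕜 → 𝕜} {x : 𝕜}

theorem hasDerivAt_inv_sq {d : 𝕜} (hu : HasDerivAt u d x) (hx : u x ≠ 0) :
    HasDerivAt (fun t => (u t ^ 2)⁻¹) (-2 * d / u x ^ 3) x := by
  refine ((hu.fun_pow 2).fun_inv (pow_ne_zero 2 hx)).congr_deriv ?_
  field_simp
  norm_num
  ring

theorem hasDerivAt_inv_sq_of_critical (hu : HasDerivAt u 0 x) (hx : u x ≠ 0) :
    HasDerivAt (fun t => (u t ^ 2)⁻¹) 0 x := by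
  simpa only [mul_zero, zero_div] using hasDerivAt_inv_sq hu hx

theorem hasDerivAt_deriv_inv_sq_of_critical {u' : 𝕜 → 𝕜} {d : 𝕜}
    (hu : ∀ᶠ t in 𝓝 x, HasDerivAt u (u' t) t) (hu' : HasDerivAt u' d x)
    (hcrit : u' x = 0) (hx : u x ≠ 0) :
    HasDerivAt (deriv fun t => (u t ^ 2)⁻¹) (-2 * d / u x ^ 3) x := by
  have hux : HasDerivAt u 0 x := hcrit ▸ hu.self_of_nhds
  have hderiv : deriv (fun t => (u t ^ 2)⁻¹) =ᶠ[𝓝 x] fun t => -2 * u' t / u t ^ 3 := by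
    filter_upwards [hu, hux.continuousAt.eventually_ne hx] with t ht hne
    exact (hasDerivAt_inv_sq ht hne).deriv
  have hquot : HasDerivAt (fun t => -2 * u' t / u t ^ 3) (-2 * d / u x ^ 3) x := by
    refine ((hu'.const_mul (-2)).fun_div (hux.fun_pow 3) (pow_ne_zero 3 hx)).congr_deriv ?_
    rw [hcrit]
    field_simp
    ring
  exact hquot.congr_of_eventuallyEq hderiv

end InvSq

end

theorem hasDerivAt_inv_cosh_sq_zero : HasDerivAt (fun y => (Real.cosh y ^ 2)⁻¹) 0 0 :=
  hasDerivAt_inv_sq_of_critical (by simpa using Real.hasDerivAt_cosh 0) (Real.cosh_pos 0).ne'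

theorem hasDerivAt_deriv_inv_cosh_sq_zero :
    HasDerivAt (deriv fun y => (Real.cosh y ^ 2)⁻¹) (-2) 0 := by
  simpa using hasDerivAt_deriv_inv_sq_of_critical (.of_forall Real.hasDerivAt_cosh)
    (Real.hasDerivAt_sinh 0) Real.sinh_zero (Real.cosh_pos 0).ne'

theorem quartic_pos (z : ℝ) : 0 < 2 * z ^ 4 - z ^ 2 + 1 := by
  nlinarith [sq_nonneg (z ^ 2), sq_nonneg (z ^ 2 - 1)]

theorem hasDerivAt_quartic (z : ℝ) :
    HasDerivAt (fun z : ℝ => 2 * z ^ 4 - z ^ 2 + 1) (8 * z ^ 3 - 2 * z) z := by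
  refine ((((hasDerivAt_pow 4 z).const_mul 2).fun_sub
    (hasDerivAt_pow 2 z)).add_const 1).congr_deriv ?_
  norm_num
  ring

theorem hasDerivAt_cubic (z : ℝ) :
    HasDerivAt (fun z : ℝ => 8 * z ^ 3 - 2 * z) (24 * z ^ 2 - 2) z := by
  refine (((hasDerivAt_pow 3 z).const_mul 8).fun_sub
    ((hasDerivAt_id' z).const_mul 2)).congr_deriv ?_
  norm_num
  ring

theorem isCritPtWithDiagHessian_effPot {z₀ : ℝ} (hz₀ : 8 * z₀ ^ 3 - 2 * z₀ = 0) :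
    IsCritPtWithDiagHessian effPot 0 z₀ (-2 * ((2 * z₀ ^ 4 - z₀ ^ 2 + 1) ^ 2)⁻¹)
      (-2 * (24 * z₀ ^ 2 - 2) / (2 * z₀ ^ 4 - z₀ ^ 2 + 1) ^ 3) := by
  have hq : 2 * z₀ ^ 4 - z₀ ^ 2 + 1 ≠ 0 := (quartic_pos z₀).ne'
  have hcrit : HasDerivAt (fun z : ℝ => 2 * z ^ 4 - z ^ 2 + 1) 0 z₀ :=
    (hasDerivAt_quartic z₀).congr_deriv hz₀
  have hg := hasDerivAt_inv_sq_of_critical hcrit hq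
  have hg' := hasDerivAt_deriv_inv_sq_of_critical (.of_forall hasDerivAt_quartic)
    (hasDerivAt_cubic z₀) hz₀ hq
  have h := IsCritPtWithDiagHessian.mul_sub_const hasDerivAt_inv_cosh_sq_zero
    hasDerivAt_deriv_inv_cosh_sq_zero hg hg' 1
  simp only [Real.cosh_zero, one_pow, inv_one, one_mul] at h
  exact h

theorem isCritPtWithDiagHessian_effPot_zero : IsCritPtWithDiagHessian effPot 0 0 (-2) 4 := by
  convert isCritPtWithDiagHessian_effPot (z₀ := 0) (by norm_num) using 1 <;> norm_num

theorem isCritPtWithDiagHessian_effPot_half {z₀ : ℝ} (hz₀ : z₀ ∈ ({1/2, -1/2} : Set ℝ)) :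
    IsCritPtWithDiagHessian effPot 0 z₀ (-128/49) (-4096/343) := by
  have hsq : z₀ ^ 2 = 1 / 4 := by rcases hz₀ with rfl | rfl <;> norm_num
  have hfour : z₀ ^ 4 = 1 / 16 := by linear_combination (z₀ ^ 2 + 1 / 4) * hsq
  have hcrit : 8 * z₀ ^ 3 - 2 * z₀ = 0 := by linear_combination 8 * z₀ * hsq
  convert isCritPtWithDiagHessian_effPot hcrit using 1 <;> norm_num [hsq, hfour]

/-- `(0,0)`, `(0,1/2)`, `(0,−1/2)` are critical points of
`Ṽ(y,z) = cosh⁻²(y)(2z⁴−z²+1)⁻² − 1`; the Hessian at `(0,0)` is `diag(−2, 4)`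
(nondegenerate, signature `(−,+)`), and the Hessian at `(0, ±1/2)` is
`diag(−128/49, −4096/343)` (nondegenerate, negative definite). -/
theorem effPot_critical_points_and_hessians :
    (∀ z₀ ∈ ({0, 1/2, -1/2} : Set ℝ),
      deriv (fun y => effPot y z₀) 0 = 0 ∧ deriv (fun z => effPot 0 z) z₀ = 0) ∧
    (deriv (fun y => deriv (fun y' => effPot y' 0) y) 0 = -2 ∧
     deriv (fun z => deriv (fun z' => effPot 0 z') z) 0 = 4 ∧
     deriv (fun z => deriv (fun y => effPot y z) 0) 0 = 0 ∧
     deriv (fun y => deriv (fun z => effPot y z) 0) 0 = 0) ∧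
    (∀ z₀ ∈ ({1/2, -1/2} : Set ℝ),
      deriv (fun y => deriv (fun y' => effPot y' z₀) y) 0 = -128/49 ∧
      deriv (fun z => deriv (fun z' => effPot 0 z') z) z₀ = -4096/343 ∧
      deriv (fun z => deriv (fun y => effPot y z) 0) z₀ = 0 ∧
      deriv (fun y => deriv (fun z => effPot y z) z₀) 0 = 0) ∧
    ((-2 : ℝ) < 0 ∧ (0 : ℝ) < 4 ∧ (-128/49 : ℝ) < 0 ∧ (-4096/343 : ℝ) < 0) := by
  refine ⟨?_, isCritPtWithDiagHessian_effPot_zero.hessian_eq_diag,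
    fun z₀ hz₀ => (isCritPtWithDiagHessian_effPot_half hz₀).hessian_eq_diag, by norm_num⟩
  rintro z₀ (rfl | hz₀)
  · exact isCritPtWithDiagHessian_effPot_zero.gradient_eq_zero
  · exact (isCritPtWithDiagHessian_effPot_half hz₀).gradient_eq_zero
end
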